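/- Let b > 0 be real, let x ∈ ℝ, and let a ∈ ℂ satisfy −(b+b⁻¹)/4 < Im a < 0. Then the integral ∫_ℝ e^{−2πixy}·D_{−a−c_b}(y) dy converges absolutely and D_a(x) = w_b(2a + c_b) · ∫_ℝ e^{−2πixy}·D_{−a−c_b}(y) dy. (All arguments of e_b occurring here lie in the strip |Im z| < (b+b⁻¹)/2.) -/

import Mathlib

/-!
Write `F` for the Fourier transform of `D_α`, `α = -a - c_b`. Shifting the contour in the transform
of `D_γ`, `γ = α + ib/2`, from height `-b/2` to `b/2` turns the functional equation of `w_b`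
(inherited from `e_b(z - ib/2) = (1 + e^{2πbz}) e_b(z + ib/2)`) into a first order difference
equation for `F` with step `ib`. `D_a` solves the same equation, so `F / D_a` is `ib`-periodic; in
the variable `e^{2πz/b}` it is holomorphic on the punctured plane and grows too slowly at `0` and
`∞` to have singularities there, hence it is constant. The constant is found at the boundary point
`x = a + c_b`, where both functions have a simple pole: the residue of `F` comes from
`D_α(y) ~ e^{-2πiαy}` as `y → ∞`, that of `D_a` from `w_b(c_b - iη) ~ 2πη`.

The difference equation requires `Im a > -b⁻¹/2`. Everything is invariant under `b ↔ b⁻¹`, so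
`Im a > -b/2` suffices as well, and `Im a > -(b+b⁻¹)/4` implies one of the two.
-/

open MeasureTheory Complex Real Filter Topology

noncomputable section

/-- The special point `c_b = i(b+b⁻¹)/2`. -/
def cb (b : ℝ) : ℂ := Complex.I * ((b : ℂ) + (b : ℂ)⁻¹) / 2

/-- The integrand in the integral representation of the noncompact quantum dilogarithm. -/
def ebIntegrand (b ε : ℝ) (z : ℂ) (t : ℝ) : ℂ :=
  Complex.exp (-2 * Complex.I * z * ((t : ℂ) + Complex.I * (ε : ℂ))) /
    (((t : ℂ) + Complex.I * (ε : ℂ)) *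
      Complex.sinh ((b : ℂ) * ((t : ℂ) + Complex.I * (ε : ℂ))) *
      Complex.sinh ((b : ℂ)⁻¹ * ((t : ℂ) + Complex.I * (ε : ℂ))))

/-- The noncompact quantum dilogarithm defined with contour parameter `ε`. -/
def ebE (b ε : ℝ) (z : ℂ) : ℂ :=
  Complex.exp ((1 / 4 : ℂ) * ∫ t : ℝ, ebIntegrand b ε z t)

/-- The noncompact quantum dilogarithm `e_b` (canonical choice of contour parameter;
the value is independent of this choice). -/
def eb (b : ℝ) (z : ℂ) : ℂ := ebE b (π * min b b⁻¹ / 2) z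

/-- The function `w_b(x) = e^{−(πi/12)(1+2c_b²)}·e^{πix²/2}/e_b(x)`. -/
def wb (b : ℝ) (z : ℂ) : ℂ :=
  Complex.exp (-((π : ℂ) * Complex.I / 12) * (1 + 2 * (cb b) ^ 2)) *
    Complex.exp ((π : ℂ) * Complex.I * z ^ 2 / 2) / eb b z

/-- The function `D_α(x) = w_b(x+α)/w_b(x−α)`. -/
def Dfun (b : ℝ) (α x : ℂ) : ℂ := wb b (x + α) / wb b (x - α)

section LineIntegrals

lemma ofReal_add_I_mul_re (t u : ℝ) : ((t : ℂ) + Complex.I * u).re = t := by simp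

lemma ofReal_add_I_mul_im (t u : ℝ) : ((t : ℂ) + Complex.I * u).im = u := by simp

lemma ofReal_add_I_mul_ne_zero (t : ℝ) {u : ℝ} (hu : u ≠ 0) : (t : ℂ) + Complex.I * u ≠ 0 := by
  intro h
  exact hu (by simpa using congrArg Complex.im h)

lemma integrable_of_norm_le_inv_sq {E : Type*} [NormedAddCommGroup E] {f : ℝ → E} {C : ℝ}
    (hf : Continuous f) (hC : ∀ t : ℝ, 1 ≤ |t| → ‖f t‖ ≤ C * (t ^ 2)⁻¹) : Integrable f := by
  refine hf.locallyIntegrable.integrable_of_isBigO_cocompact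
    (g := fun t : ℝ => (1 + t ^ 2)⁻¹) ?_ (integrable_inv_one_add_sq.integrableAtFilter _)
  have hlarge : ∀ᶠ t : ℝ in cocompact ℝ, 1 ≤ |t| :=
    tendsto_norm_cocompact_atTop.eventually_ge_atTop 1
  refine Asymptotics.IsBigO.of_bound (|C| * 2) ?_
  filter_upwards [hlarge] with t ht
  have ht2 : 1 ≤ t ^ 2 := (one_le_sq_iff_one_le_abs t).mpr ht
  calc ‖f t‖ ≤ C * (t ^ 2)⁻¹ := hC t ht
    _ ≤ |C| * (2 * (1 + t ^ 2)⁻¹) := by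
        gcongr
        · exact le_abs_self C
        · rw [inv_le_comm₀ (by positivity) (by positivity), mul_inv, inv_inv]
          linarith
    _ = |C| * 2 * ‖(1 + t ^ 2)⁻¹‖ := by rw [Real.norm_of_nonneg (by positivity)]; ring

lemma exp_neg_le_inv_sq {s t : ℝ} (hs : 0 < s) (ht : 0 < t) :
    Real.exp (-(s * t)) ≤ 2 / s ^ 2 * (t ^ 2)⁻¹ := by
  have h := Real.pow_div_factorial_le_exp (s * t) (by positivity) 2
  rw [Real.exp_neg]
  calc (Real.exp (s * t))⁻¹ ≤ ((s * t) ^ 2 / (2 : ℕ).factorial)⁻¹ := by gcongr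
    _ = 2 / s ^ 2 * (t ^ 2)⁻¹ := by
      rw [Nat.factorial_two]
      field_simp
      norm_num

lemma abs_le_inv_mul_exp {δ : ℝ} (hδ : 0 < δ) (t : ℝ) : |t| ≤ δ⁻¹ * Real.exp (δ * |t|) := by
  have h := Real.add_one_le_exp (δ * |t|)
  rw [inv_mul_eq_div, le_div_iff₀ hδ]
  linarith

/-- `f` is holomorphic on `S` and `O(φ(|Re w|))` there as `|Re w| → ∞`. The bound is only required
for `1 ≤ |Re w|`, so that `S` may be a strip punctured near the imaginary axis. -/
structure HolomorphicBoundOn (f : ℂ → ℂ) (φ : ℝ → ℝ) (S : Set ℂ) : Prop where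
  differentiableAt : ∀ w ∈ S, DifferentiableAt ℂ f w
  exists_norm_le : ∃ C, ∀ w ∈ S, 1 ≤ |w.re| → ‖f w‖ ≤ C * φ |w.re|

/-- Holomorphy on `S` with exponential decay of rate `s` (growth, if `s < 0`) in `|Re w|`. -/
abbrev ExpDecayOn (f : ℂ → ℂ) (s : ℝ) (S : Set ℂ) : Prop :=
  HolomorphicBoundOn f (fun t => Real.exp (-(s * t))) S

namespace HolomorphicBoundOn

variable {f g : ℂ → ℂ} {φ ψ : ℝ → ℝ} {s r u : ℝ} {S T : Set ℂ}

lemma mono (h : HolomorphicBoundOn f φ S) (hT : T ⊆ S) : HolomorphicBoundOn f φ T :=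
  ⟨fun w hw => h.differentiableAt w (hT hw),
    h.exists_norm_le.imp fun _ hC w hw => hC w (hT hw)⟩

lemma of_le (h : HolomorphicBoundOn f φ S) {K : ℝ} (hφ : ∀ t, 1 ≤ t → 0 ≤ φ t)
    (hψ : ∀ t, 1 ≤ t → φ t ≤ K * ψ t) : HolomorphicBoundOn f ψ S := by
  obtain ⟨C, hC⟩ := h.exists_norm_le
  refine ⟨h.differentiableAt, |C| * K, fun w hw hre => (hC w hw hre).trans ?_⟩
  calc C * φ |w.re| ≤ |C| * φ |w.re| := by
        gcongr
        exacts [hφ _ hre, le_abs_self C]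
    _ ≤ |C| * (K * ψ |w.re|) := by
        gcongr
        exact hψ _ hre
    _ = |C| * K * ψ |w.re| := (mul_assoc _ _ _).symm

lemma inv_of_inv_sq (h : HolomorphicBoundOn f (fun t => (t ^ 2)⁻¹) S) :
    HolomorphicBoundOn f (fun t => t⁻¹) S :=
  h.of_le (K := 1) (fun t _ => by positivity) fun t ht => by
    rw [one_mul]
    exact inv_anti₀ (by linarith) (le_self_pow₀ ht two_ne_zero)

lemma sub (hf : HolomorphicBoundOn f φ S) (hg : HolomorphicBoundOn g φ S) :
    HolomorphicBoundOn (fun w => f w - g w) φ S := by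
  obtain ⟨C, hC⟩ := hf.exists_norm_le
  obtain ⟨D, hD⟩ := hg.exists_norm_le
  refine ⟨fun w hw => (hf.differentiableAt w hw).sub (hg.differentiableAt w hw), C + D,
    fun w hw hre => (norm_sub_le _ _).trans ?_⟩
  linarith [hC w hw hre, hD w hw hre]

lemma const_mul (c : ℂ) (h : HolomorphicBoundOn f φ S) :
    HolomorphicBoundOn (fun w => c * f w) φ S := by
  obtain ⟨C, hC⟩ := h.exists_norm_le
  refine ⟨fun w hw => (h.differentiableAt w hw).const_mul c, ‖c‖ * C, fun w hw hre => ?_⟩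
  rw [norm_mul, mul_assoc]
  exact mul_le_mul_of_nonneg_left (hC w hw hre) (norm_nonneg c)

lemma mul (hf : HolomorphicBoundOn f φ S) (hg : HolomorphicBoundOn g ψ S) :
    HolomorphicBoundOn (fun w => f w * g w) (fun t => φ t * ψ t) S := by
  obtain ⟨C, hC⟩ := hf.exists_norm_le
  obtain ⟨D, hD⟩ := hg.exists_norm_le
  refine ⟨fun w hw => (hf.differentiableAt w hw).mul (hg.differentiableAt w hw), C * D,
    fun w hw hre => ?_⟩
  calc ‖f w * g w‖ = ‖f w‖ * ‖g w‖ := norm_mul _ _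
    _ ≤ C * φ |w.re| * (D * ψ |w.re|) :=
        mul_le_mul (hC w hw hre) (hD w hw hre) (norm_nonneg _)
          ((norm_nonneg _).trans (hC w hw hre))
    _ = C * D * (φ |w.re| * ψ |w.re|) := by ring

lemma mul_exp (hf : ExpDecayOn f s S) (hg : ExpDecayOn g r S) :
    ExpDecayOn (fun w => f w * g w) (s + r) S := by
  convert hf.mul hg using 2 with t
  rw [← Real.exp_add]
  ring_nf

lemma of_exp (h : ExpDecayOn f s S) (hs : 0 < s) :
    HolomorphicBoundOn f (fun t => (t ^ 2)⁻¹) S :=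
  of_le h (K := 2 / s ^ 2) (fun _ _ => (Real.exp_pos _).le)
    fun _ ht => exp_neg_le_inv_sq hs (by linarith)

lemma continuous_line (h : HolomorphicBoundOn f φ S) (hu : ∀ t : ℝ, (t : ℂ) + Complex.I * u ∈ S) :
    Continuous fun t : ℝ => f (t + Complex.I * u) :=
  continuous_iff_continuousAt.mpr fun t =>
    (h.differentiableAt _ (hu t)).continuousAt.comp (f := fun t : ℝ => (t : ℂ) + Complex.I * u)
      (by fun_prop)

lemma exists_norm_line_le (h : ExpDecayOn f s S) (hu : ∀ t : ℝ, (t : ℂ) + Complex.I * u ∈ S) :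
    ∃ C, ∀ t : ℝ, ‖f (t + Complex.I * u)‖ ≤ C * Real.exp (-(s * |t|)) := by
  obtain ⟨C, hC⟩ := h.exists_norm_le
  have hcont : ContinuousOn (fun t : ℝ => f (t + Complex.I * u) * Real.exp (s * |t|))
      (Set.Icc (-1) 1) := ((continuous_line h hu).mul (by fun_prop)).continuousOn
  obtain ⟨M, hM⟩ := isCompact_Icc.exists_bound_of_continuousOn hcont
  refine ⟨max C M, fun t => ?_⟩
  rcases le_total 1 |t| with ht | ht
  · refine (hC _ (hu t) (by simpa using ht)).trans ?_
    rw [ofReal_add_I_mul_re]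
    gcongr
    exact le_max_left _ _
  · have hMt := hM t (abs_le.mp ht)
    rw [norm_mul, Complex.norm_real, Real.norm_of_nonneg (Real.exp_pos _).le] at hMt
    rw [Real.exp_neg, ← div_eq_mul_inv, le_div_iff₀ (Real.exp_pos _)]
    exact hMt.trans (le_max_right _ _)

lemma integrable_line (h : HolomorphicBoundOn f (fun t => (t ^ 2)⁻¹) S)
    (hu : ∀ t : ℝ, (t : ℂ) + Complex.I * u ∈ S) :
    Integrable fun t : ℝ => f (t + Complex.I * u) := by
  obtain ⟨C, hC⟩ := h.exists_norm_le
  exact integrable_of_norm_le_inv_sq (h.continuous_line hu) fun t ht => by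
    simpa using hC _ (hu t) (by simpa using ht)

end HolomorphicBoundOn

lemma integrable_exp_neg_mul_abs {s : ℝ} (hs : 0 < s) :
    Integrable fun t : ℝ => Real.exp (-(s * |t|)) :=
  integrable_of_norm_le_inv_sq (by fun_prop) fun t ht => by
    rw [Real.norm_of_nonneg (Real.exp_pos _).le, ← sq_abs]
    exact exp_neg_le_inv_sq hs (by linarith)

end LineIntegrals

section ContourShift

variable {f : ℂ → ℂ} {c d : ℝ}

lemma tendsto_integral_vertical_zero {C : ℝ} (hcd : c ≤ d)
    (hC : ∀ w : ℂ, w.im ∈ Set.Icc c d → 1 ≤ |w.re| → ‖f w‖ ≤ C * |w.re|⁻¹) {l : Filter ℝ}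
    (hl : Tendsto (fun R : ℝ => |R|) l atTop) :
    Tendsto (fun R : ℝ => ∫ u in c..d, f (R + Complex.I * u)) l (𝓝 0) := by
  have hlim : Tendsto (fun R : ℝ => C * |R|⁻¹ * |d - c|) l (𝓝 0) := by
    simpa using ((tendsto_inv_atTop_zero.comp hl).const_mul C).mul_const |d - c|
  refine squeeze_zero_norm' ?_ hlim
  filter_upwards [hl.eventually_ge_atTop 1] with R hR
  refine intervalIntegral.norm_integral_le_of_norm_le_const fun u hu => ?_
  rw [Set.uIoc_of_le hcd] at hu
  simpa using hC (R + Complex.I * u) (by simpa using ⟨hu.1.le, hu.2⟩) (by simpa using hR)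

lemma integral_line_sub_eq_zero (hcd : c ≤ d)
    (h : HolomorphicBoundOn f (fun t => t⁻¹) {w | w.im ∈ Set.Icc c d})
    (hint : Integrable fun t : ℝ => f (t + Complex.I * c) - f (t + Complex.I * d)) :
    ∫ t : ℝ, (f (t + Complex.I * c) - f (t + Complex.I * d)) = 0 := by
  obtain ⟨C, hC⟩ := h.exists_norm_le
  have hline : ∀ u ∈ Set.Icc c d, Continuous fun t : ℝ => f (t + Complex.I * u) :=
    fun u hu => h.continuous_line fun t => by simpa using hu
  have hrect : ∀ R : ℝ, (∫ t in (-R)..R, (f (t + Complex.I * c) - f (t + Complex.I * d))) =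
      Complex.I • (∫ u in c..d, f (((-R : ℝ) : ℂ) + Complex.I * u)) -
        Complex.I • ∫ u in c..d, f (R + Complex.I * u) := by
    intro R
    have hcauchy := Complex.integral_boundary_rect_eq_zero_of_differentiableOn f
      ⟨-R, c⟩ ⟨R, d⟩ fun w hw => by
        rw [Complex.mem_reProdIm, Set.uIcc_of_le hcd] at hw
        exact (h.differentiableAt w hw.2).differentiableWithinAt
    simp only [mul_comm _ Complex.I] at hcauchy
    rw [intervalIntegral.integral_sub
      ((hline c ⟨le_rfl, hcd⟩).intervalIntegrable _ _)
      ((hline d ⟨hcd, le_rfl⟩).intervalIntegrable _ _)]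
    linear_combination hcauchy
  have hright := tendsto_integral_vertical_zero hcd hC tendsto_abs_atTop_atTop
  have hleft := tendsto_integral_vertical_zero hcd hC tendsto_abs_atBot_atTop
  have hsides := ((hleft.comp tendsto_neg_atTop_atBot).const_smul Complex.I).sub
    (hright.const_smul Complex.I)
  rw [smul_zero, sub_zero] at hsides
  exact tendsto_nhds_unique
    (intervalIntegral_tendsto_integral hint tendsto_neg_atTop_atBot tendsto_id)
    (hsides.congr fun R => (hrect R).symm)

lemma HolomorphicBoundOn.integral_line_eq (hcd : c ≤ d)
    (h : HolomorphicBoundOn f (fun t => (t ^ 2)⁻¹) {w | w.im ∈ Set.Icc c d}) :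
    ∫ t : ℝ, f (t + Complex.I * c) = ∫ t : ℝ, f (t + Complex.I * d) := by
  have hc := h.integrable_line (u := c) fun t => by simpa using hcd
  have hd := h.integrable_line (u := d) fun t => by simpa using hcd
  rw [← sub_eq_zero, ← integral_sub hc hd]
  exact integral_line_sub_eq_zero hcd h.inv_of_inv_sq (hc.sub hd)

lemma exists_eq_differentiableAt_of_tendsto_zero {p : ℂ}
    (hf : ∀ᶠ w in 𝓝[≠] p, DifferentiableAt ℂ f w)
    (h0 : Tendsto (fun w => (w - p) * f w) (𝓝[≠] p) (𝓝 0)) :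
    ∃ F : ℂ → ℂ, (∀ w, w ≠ p → F w = f w) ∧ DifferentiableAt ℂ F p := by
  obtain ⟨S, hS, hfS⟩ : ∃ S ∈ 𝓝 p, ∀ w ∈ S, w ≠ p → DifferentiableAt ℂ f w :=
    ⟨_, eventually_nhdsWithin_iff.mp hf, fun _ hw => hw⟩
  have hconst : Tendsto (fun w => (w - p) * f p) (𝓝[≠] p) (𝓝 0) := by
    refine Tendsto.mono_left ?_ nhdsWithin_le_nhds
    exact Continuous.tendsto' (by fun_prop) _ _ (by simp)
  have hlittle : (fun w => f w - f p) =o[𝓝[≠] p] fun w => (w - p)⁻¹ := by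
    refine Asymptotics.isLittleO_of_tendsto' ?_ ?_
    · filter_upwards [self_mem_nhdsWithin] with w hw h
      exact absurd (sub_eq_zero.mp (inv_eq_zero.mp h)) hw
    · simpa [div_inv_eq_mul, mul_comm, mul_sub] using h0.sub hconst
  exact ⟨_, fun w hw => Function.update_of_ne hw _ _,
    (Complex.differentiableOn_update_limUnder_of_isLittleO hS
      (fun w hw => (hfS w hw.1 hw.2).differentiableWithinAt) hlittle).differentiableAt hS⟩

lemma differentiableAt_of_eq_of_ne {F : ℂ → ℂ} {p w : ℂ} (hF : ∀ v, v ≠ p → F v = f v)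
    (hw : w ≠ p) (hf : DifferentiableAt ℂ f w) : DifferentiableAt ℂ F w :=
  hf.congr_of_eventuallyEq ((isOpen_ne.eventually_mem hw).mono hF)

lemma inv_line_sub_inv_line {m : ℝ} (hm : 0 < m) (t : ℝ) :
    ((t : ℂ) + Complex.I * ((-m : ℝ) : ℂ))⁻¹ - ((t : ℂ) + Complex.I * m)⁻¹ =
      2 * Complex.I * (m⁻¹ * (1 + (t / m) ^ 2)⁻¹ : ℝ) := by
  have h1 := ofReal_add_I_mul_ne_zero t (neg_ne_zero.mpr hm.ne')
  have h2 := ofReal_add_I_mul_ne_zero t hm.ne'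
  have hm0 : (m : ℂ) ≠ 0 := mod_cast hm.ne'
  have hpos : ((t : ℂ) ^ 2 + (m : ℂ) ^ 2) ≠ 0 := by
    have : t ^ 2 + m ^ 2 ≠ 0 := by positivity
    exact_mod_cast this
  have hpos' : (1 + ((t : ℂ) / m) ^ 2) ≠ 0 := by
    rw [div_pow, one_add_div (pow_ne_zero _ hm0)]
    exact div_ne_zero (by rwa [add_comm]) (pow_ne_zero _ hm0)
  push_cast at h1 ⊢
  rw [inv_sub_inv h1 h2, div_pow, one_add_div (pow_ne_zero _ hm0), inv_div,
    div_eq_iff (mul_ne_zero h1 h2)]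
  rw [add_comm] at hpos
  field_simp
  linear_combination (2 * Complex.I * m ^ 3) * Complex.I_sq

lemma integrable_inv_line_sub_inv_line {m : ℝ} (hm : 0 < m) :
    Integrable fun t : ℝ =>
      ((t : ℂ) + Complex.I * ((-m : ℝ) : ℂ))⁻¹ - ((t : ℂ) + Complex.I * m)⁻¹ := by
  simp only [inv_line_sub_inv_line hm]
  exact (((integrable_inv_one_add_sq.comp_div hm.ne').const_mul m⁻¹).ofReal).const_mul _

lemma integral_inv_line_sub_inv_line {m : ℝ} (hm : 0 < m) :
    ∫ t : ℝ, (((t : ℂ) + Complex.I * ((-m : ℝ) : ℂ))⁻¹ - ((t : ℂ) + Complex.I * m)⁻¹) =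
      2 * π * Complex.I := by
  have hcauchy : ∫ t : ℝ, m⁻¹ * (1 + (t / m) ^ 2)⁻¹ = π := by
    rw [integral_const_mul, Measure.integral_comp_div (fun t : ℝ => (1 + t ^ 2)⁻¹),
      integral_univ_inv_one_add_sq, abs_of_pos hm, smul_eq_mul, inv_mul_cancel_left₀ hm.ne']
  simp only [inv_line_sub_inv_line hm]
  rw [integral_const_mul, integral_complex_ofReal, hcauchy]
  ring

lemma HolomorphicBoundOn.sub_const_mul_inv (h : HolomorphicBoundOn f (fun t => (t ^ 2)⁻¹) S)
    (hS : ∀ w ∈ S, w ≠ 0) (R : ℂ) :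
    HolomorphicBoundOn (fun w => f w - R * w⁻¹) (fun t => t⁻¹) S := by
  have hinv : HolomorphicBoundOn (fun w => w⁻¹) (fun t => t⁻¹) S :=
    ⟨fun w hw => differentiableAt_inv (hS w hw), 1, fun w _ hre => by
      rw [one_mul, norm_inv]
      exact inv_anti₀ (by linarith) (Complex.abs_re_le_norm w)⟩
  exact h.inv_of_inv_sq.sub (hinv.const_mul R)

lemma exists_holomorphicBoundOn_sub_simple_pole (hc : c < 0) (hd : 0 < d) {R : ℂ}
    (h : HolomorphicBoundOn f (fun t => (t ^ 2)⁻¹) ({w | w.im ∈ Set.Icc c d} \ {0}))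
    (h0 : Tendsto (fun w => w * f w) (𝓝[≠] 0) (𝓝 R)) :
    ∃ F : ℂ → ℂ, HolomorphicBoundOn F (fun t => t⁻¹) {w | w.im ∈ Set.Icc c d} ∧
      ∀ w, w ≠ 0 → F w = f w - R * w⁻¹ := by
  have hsub := h.sub_const_mul_inv (fun w hw => hw.2) R
  have hstrip : ∀ᶠ w : ℂ in 𝓝 0, w.im ∈ Set.Icc c d :=
    Complex.continuous_im.continuousAt.eventually_mem (by simpa using Icc_mem_nhds hc hd)
  have hzero : Tendsto (fun w => (w - 0) * (f w - R * w⁻¹)) (𝓝[≠] 0) (𝓝 0) := by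
    have hres := h0.sub_const R
    rw [sub_self] at hres
    refine hres.congr' ?_
    filter_upwards [self_mem_nhdsWithin] with w hw
    field_simp [show w ≠ 0 from hw]
    ring
  obtain ⟨F, hF, hF0⟩ := exists_eq_differentiableAt_of_tendsto_zero (by
    filter_upwards [self_mem_nhdsWithin, hstrip.filter_mono nhdsWithin_le_nhds] with w hw0 hw
    exact hsub.differentiableAt w ⟨hw, hw0⟩) hzero
  obtain ⟨C, hC⟩ := hsub.exists_norm_le
  refine ⟨F, ⟨fun w hw => ?_, C, fun w hw hre => ?_⟩, hF⟩
  · rcases eq_or_ne w 0 with rfl | hw0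
    · exact hF0
    · exact differentiableAt_of_eq_of_ne hF hw0 (hsub.differentiableAt w ⟨hw, hw0⟩)
  · have hw0 : w ≠ 0 := by
      rintro rfl
      norm_num at hre
    rw [hF w hw0]
    exact hC w ⟨hw, hw0⟩ hre

lemma integral_line_neg_sub_line_eq_residue {m : ℝ} (hm : 0 < m) {R : ℂ}
    (h : HolomorphicBoundOn f (fun t => (t ^ 2)⁻¹) ({w | w.im ∈ Set.Icc (-m) m} \ {0}))
    (h0 : Tendsto (fun w => w * f w) (𝓝[≠] 0) (𝓝 R)) :
    (∫ t : ℝ, f (t + Complex.I * ((-m : ℝ) : ℂ))) - ∫ t : ℝ, f (t + Complex.I * m) =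
      2 * π * Complex.I * R := by
  have hne : ∀ t : ℝ, (t : ℂ) + Complex.I * ((-m : ℝ) : ℂ) ≠ 0 ∧ (t : ℂ) + Complex.I * m ≠ 0 :=
    fun t => ⟨ofReal_add_I_mul_ne_zero t (neg_ne_zero.mpr hm.ne'),
      ofReal_add_I_mul_ne_zero t hm.ne'⟩
  have hlo := h.integrable_line (u := -m) fun t => ⟨by simp [hm.le], (hne t).1⟩
  have hup := h.integrable_line (u := m) fun t => ⟨by simp [hm.le], (hne t).2⟩
  have hlines : Integrable fun t : ℝ =>
      f (t + Complex.I * ((-m : ℝ) : ℂ)) - f (t + Complex.I * m) := hlo.sub hup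
  have hpole := (integrable_inv_line_sub_inv_line hm).const_mul R
  obtain ⟨F, hF, hFf⟩ :=
    exists_holomorphicBoundOn_sub_simple_pole (neg_lt_zero.mpr hm) hm h h0
  have hsplit : ∀ t : ℝ, F (t + Complex.I * ((-m : ℝ) : ℂ)) - F (t + Complex.I * m) =
      f (t + Complex.I * ((-m : ℝ) : ℂ)) - f (t + Complex.I * m) -
        R * (((t : ℂ) + Complex.I * ((-m : ℝ) : ℂ))⁻¹ - ((t : ℂ) + Complex.I * m)⁻¹) := by
    intro t
    rw [hFf _ (hne t).1, hFf _ (hne t).2]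
    ring
  have hzero := integral_line_sub_eq_zero (by linarith) hF (by
    simp only [hsplit]
    exact hlines.sub hpole)
  simp only [hsplit] at hzero
  rw [integral_sub hlines hpole, integral_sub hlo hup, integral_const_mul,
    integral_inv_line_sub_inv_line hm, sub_eq_zero] at hzero
  rw [hzero, mul_comm]

lemma integral_line_sub_line_eq_residue (hc : c < 0) (hd : 0 < d) {R : ℂ}
    (h : HolomorphicBoundOn f (fun t => (t ^ 2)⁻¹) ({w | w.im ∈ Set.Icc c d} \ {0}))
    (h0 : Tendsto (fun w => w * f w) (𝓝[≠] 0) (𝓝 R)) :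
    (∫ t : ℝ, f (t + Complex.I * c)) - ∫ t : ℝ, f (t + Complex.I * d) = 2 * π * Complex.I * R := by
  obtain ⟨m, hm, hmc, hmd⟩ : ∃ m, 0 < m ∧ m ≤ -c ∧ m ≤ d :=
    ⟨min (-c) d, lt_min (by linarith) hd, min_le_left _ _, min_le_right _ _⟩
  have hlower := (h.mono (T := {w | w.im ∈ Set.Icc c (-m)}) fun w hw =>
    ⟨⟨hw.1, by linarith [hw.2]⟩, fun h0 => by
      have := hw.2
      rw [h0, Complex.zero_im] at this
      linarith⟩).integral_line_eq (by linarith)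
  have hupper := (h.mono (T := {w | w.im ∈ Set.Icc m d}) fun w hw =>
    ⟨⟨by linarith [hw.1], hw.2⟩, fun h0 => by
      have := hw.1
      rw [h0, Complex.zero_im] at this
      linarith⟩).integral_line_eq hmd
  rw [hlower, ← hupper]
  exact integral_line_neg_sub_line_eq_residue hm
    (h.mono (Set.sdiff_subset_sdiff_left fun w hw => ⟨by linarith [hw.1], by linarith [hw.2]⟩)) h0

end ContourShift

section LineTransform

lemma norm_exp_neg_two_I_mul_le (z w : ℂ) :
    ‖Complex.exp (-2 * Complex.I * z * w)‖ ≤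
      Real.exp (2 * w.im * z.re) * Real.exp (2 * |z.im| * |w.re|) := by
  rw [Complex.norm_exp, ← Real.exp_add, Real.exp_le_exp]
  have hre : (-2 * Complex.I * z * w).re = 2 * w.im * z.re + 2 * (z.im * w.re) := by
    simp
    ring
  rw [hre, mul_assoc 2 |z.im|, ← abs_mul]
  linarith [le_abs_self (z.im * w.re)]

lemma expDecayOn_exp (z : ℂ) (m : ℝ) :
    ExpDecayOn (fun w => Complex.exp (-2 * Complex.I * z * w)) (-(2 * |z.im|))
      {w | |w.im| ≤ m} := by
  refine ⟨fun w _ => by fun_prop, Real.exp (2 * (m * |z.re|)),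
    fun w hw _ => (norm_exp_neg_two_I_mul_le z w).trans ?_⟩
  have him : w.im * z.re ≤ m * |z.re| :=
    calc w.im * z.re ≤ |w.im| * |z.re| := (le_abs_self _).trans (abs_mul _ _).le
      _ ≤ m * |z.re| := by gcongr; exact hw
  rw [neg_mul, neg_neg]
  gcongr ?_ * _
  exact Real.exp_le_exp.mpr (by linarith)

lemma expDecayOn_id {δ : ℝ} (hδ : 0 < δ) (m : ℝ) :
    ExpDecayOn (fun w => w) (-δ) {w | |w.im| ≤ m} := by
  refine ⟨fun w _ => differentiableAt_id, (1 + |m|) * δ⁻¹, fun w hw hre => ?_⟩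
  calc ‖w‖ ≤ |w.re| + |w.im| := Complex.norm_le_abs_re_add_abs_im w
    _ ≤ (1 + |m|) * |w.re| := by nlinarith [hw.trans (le_abs_self m), abs_nonneg m]
    _ ≤ (1 + |m|) * (δ⁻¹ * Real.exp (δ * |w.re|)) := by
        gcongr
        exact abs_le_inv_mul_exp hδ _
    _ = (1 + |m|) * δ⁻¹ * Real.exp (-(-δ * |w.re|)) := by rw [neg_mul, neg_neg, mul_assoc]

/-- The Fourier-Laplace transform `∫ e^{-2izw} f(w) dw` of `f` along the line `Im w = u`. -/
def lineTransform (f : ℂ → ℂ) (u : ℝ) (z : ℂ) : ℂ :=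
  ∫ t : ℝ, Complex.exp (-2 * Complex.I * z * (t + Complex.I * u)) * f (t + Complex.I * u)

lemma lineTransform_neg (f : ℂ → ℂ) (u : ℝ) (z : ℂ) :
    lineTransform f u (-z) = lineTransform (fun w => f (-w)) (-u) z := by
  rw [lineTransform, lineTransform, ← integral_neg_eq_self]
  refine integral_congr_ae (ae_of_all _ fun t => ?_)
  simp only [Complex.ofReal_neg]
  ring_nf

variable {f : ℂ → ℂ} {s u : ℝ}

lemma norm_lineTransform_integrand_le {C s' : ℝ} {z : ℂ} (hz : |z.im| ≤ s') {t : ℝ}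
    (hC : ‖f (t + Complex.I * u)‖ ≤ C * Real.exp (-(s * |t|))) :
    ‖Complex.exp (-2 * Complex.I * z * (t + Complex.I * u)) * f (t + Complex.I * u)‖ ≤
      Real.exp (2 * u * z.re) * (C * Real.exp (-((s - 2 * s') * |t|))) := by
  have hkernel := norm_exp_neg_two_I_mul_le z (t + Complex.I * u)
  rw [ofReal_add_I_mul_re, ofReal_add_I_mul_im] at hkernel
  calc _ ≤ Real.exp (2 * u * z.re) * Real.exp (2 * |z.im| * |t|) *
        (C * Real.exp (-(s * |t|))) := by
        rw [norm_mul]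
        exact mul_le_mul hkernel hC (norm_nonneg _) (by positivity)
    _ ≤ Real.exp (2 * u * z.re) * Real.exp (2 * s' * |t|) * (C * Real.exp (-(s * |t|))) := by
        gcongr
        exact (norm_nonneg _).trans hC
    _ = Real.exp (2 * u * z.re) * (C * (Real.exp (2 * s' * |t|) * Real.exp (-(s * |t|)))) := by
        ring
    _ = _ := by
        rw [← Real.exp_add]
        ring_nf

lemma continuous_lineTransform_integrand (h : ExpDecayOn f s {w | w.im = u}) (z : ℂ) :
    Continuous fun t : ℝ =>
      Complex.exp (-2 * Complex.I * z * (t + Complex.I * u)) * f (t + Complex.I * u) :=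
  Continuous.mul (by fun_prop) (h.continuous_line (by simp))

lemma integrable_lineTransform (h : ExpDecayOn f s {w | w.im = u}) {z : ℂ}
    (hz : 2 * |z.im| < s) :
    Integrable fun t : ℝ =>
      Complex.exp (-2 * Complex.I * z * (t + Complex.I * u)) * f (t + Complex.I * u) := by
  obtain ⟨C, hC⟩ := h.exists_norm_line_le (u := u) (by simp)
  have hbound := (integrable_exp_neg_mul_abs (s := s - 2 * |z.im|) (by linarith)).const_mul C
  exact (hbound.const_mul (Real.exp (2 * u * z.re))).mono'
    (continuous_lineTransform_integrand h z).aestronglyMeasurable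
    (ae_of_all _ fun t => norm_lineTransform_integrand_le le_rfl (hC t))

lemma exists_norm_lineTransform_le (h : ExpDecayOn f s {w | w.im = u}) {s' : ℝ}
    (hs : 2 * s' < s) :
    ∃ C, ∀ z : ℂ, |z.im| ≤ s' → ‖lineTransform f u z‖ ≤ C * Real.exp (2 * u * z.re) := by
  obtain ⟨C, hC⟩ := h.exists_norm_line_le (u := u) (by simp)
  refine ⟨∫ t : ℝ, C * Real.exp (-((s - 2 * s') * |t|)), fun z hz => ?_⟩
  have hbound := (integrable_exp_neg_mul_abs (s := s - 2 * s') (by linarith)).const_mul C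
  rw [mul_comm, ← integral_const_mul]
  exact norm_integral_le_of_norm_le (hbound.const_mul _)
    (ae_of_all _ fun t => norm_lineTransform_integrand_le hz (hC t))

lemma hasDerivAt_lineTransform (h : ExpDecayOn f s {w | w.im = u}) {z : ℂ}
    (hz : 2 * |z.im| < s) :
    HasDerivAt (lineTransform f u) (-2 * Complex.I * lineTransform (fun w => w * f w) u z) z := by
  obtain ⟨s', hzs', hs's⟩ : ∃ s', |z.im| < s' ∧ 2 * s' < s :=
    ⟨(|z.im| + s / 2) / 2, by linarith, by linarith⟩
  set δ := (s - 2 * s') / 2 with hδ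
  have hδ0 : 0 < δ := by linarith
  have hid : ExpDecayOn (fun w => w * f w) (-δ + s) {w | w.im = u} :=
    ((expDecayOn_id hδ0 |u|).mono fun w hw => (congrArg abs hw).le).mul_exp h
  obtain ⟨C, hC⟩ := hid.exists_norm_line_le (u := u) (by simp)
  have hU : {x : ℂ | |x.im| < s'} ∩ {x : ℂ | 2 * u * x.re < 2 * u * z.re + 1} ∈ 𝓝 z :=
    ((isOpen_lt (by fun_prop) continuous_const).inter
      (isOpen_lt (by fun_prop) continuous_const)).mem_nhds ⟨hzs', lt_add_one (2 * u * z.re)⟩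
  have hbound : Integrable fun t : ℝ => 2 * (Real.exp (2 * u * z.re + 1) *
      (C * Real.exp (-((-δ + s - 2 * s') * |t|)))) :=
    (((integrable_exp_neg_mul_abs (by linarith)).const_mul C).const_mul _).const_mul 2
  have hC0 : 0 ≤ C := by simpa using (norm_nonneg _).trans (hC 0)
  have hderiv := (hasDerivAt_integral_of_dominated_loc_of_deriv_le hU
    (F := fun x (t : ℝ) =>
      Complex.exp (-2 * Complex.I * x * (t + Complex.I * u)) * f (t + Complex.I * u))
    (F' := fun x (t : ℝ) => -2 * Complex.I *
      (Complex.exp (-2 * Complex.I * x * (t + Complex.I * u)) *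
        ((t + Complex.I * u) * f (t + Complex.I * u))))
    (Eventually.of_forall fun x => (continuous_lineTransform_integrand h x).aestronglyMeasurable)
    (integrable_lineTransform h hz)
    ((continuous_lineTransform_integrand hid z).const_mul _).aestronglyMeasurable
    (ae_of_all _ fun t x hx => ?_) hbound (ae_of_all _ fun t x _ => ?_)).2
  · rwa [integral_const_mul] at hderiv
  · rw [norm_mul, norm_mul, norm_neg, Complex.norm_ofNat, Complex.norm_I, mul_one]
    gcongr
    refine (norm_lineTransform_integrand_le (f := fun w => w * f w) hx.1.le (hC t)).trans ?_
    gcongr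
    exact hx.2.le
  · have hlin : HasDerivAt (fun x : ℂ => -2 * Complex.I * x * (t + Complex.I * u))
        (-2 * Complex.I * (t + Complex.I * u)) x := by
      simpa using ((hasDerivAt_id x).const_mul (-2 * Complex.I)).mul_const _
    exact (hlin.cexp.mul_const _).congr_deriv (by ring)

lemma lineTransform_eq_lineTransform {c d : ℝ} (hcd : c ≤ d)
    (h : ExpDecayOn f s {w | w.im ∈ Set.Icc c d}) {z : ℂ} (hz : 2 * |z.im| < s) :
    lineTransform f c z = lineTransform f d z := by
  have hexp := (expDecayOn_exp z (max |c| |d|)).mono (T := {w | w.im ∈ Set.Icc c d})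
    fun w hw => abs_le_max_abs_abs hw.1 hw.2
  exact ((hexp.mul_exp h).of_exp (by linarith)).integral_line_eq hcd

end LineTransform

section TriplePole

lemma holomorphicBoundOn_inv_pow (n : ℕ) :
    HolomorphicBoundOn (fun w => (w ^ (n + 2))⁻¹) (fun t => (t ^ 2)⁻¹) {0}ᶜ := by
  refine ⟨fun w hw => (differentiableAt_pow _).inv (pow_ne_zero _ hw), 1, fun w _ hre => ?_⟩
  have hnorm := Complex.abs_re_le_norm w
  rw [one_mul, norm_inv, norm_pow]
  refine inv_anti₀ (by positivity) ?_
  calc |w.re| ^ 2 ≤ ‖w‖ ^ 2 := by gcongr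
    _ ≤ ‖w‖ ^ (n + 2) := pow_le_pow_right₀ (hre.trans hnorm) (by omega)

lemma integral_line_inv_pow (n : ℕ) {u : ℝ} (hu : u ≠ 0) :
    ∫ t : ℝ, (((t : ℂ) + Complex.I * u) ^ (n + 2))⁻¹ = 0 := by
  have hne := fun t => ofReal_add_I_mul_ne_zero t hu
  have hprim : ∀ t : ℝ, HasDerivAt
      (fun t : ℝ => -(n + 1 : ℂ)⁻¹ * (((t : ℂ) + Complex.I * u) ^ (n + 1))⁻¹)
      (((t : ℂ) + Complex.I * u) ^ (n + 2))⁻¹ t := by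
    intro t
    have hline : HasDerivAt (fun t : ℝ => (t : ℂ) + Complex.I * u) 1 t :=
      (hasDerivAt_id t).ofReal_comp.add_const _
    have hn : (n + 1 : ℂ) ≠ 0 := Nat.cast_add_one_ne_zero n
    refine (((hline.fun_pow (n + 1)).inv (pow_ne_zero _ (hne t))).const_mul
      (-(n + 1 : ℂ)⁻¹)).congr_deriv ?_
    have := hne t
    push_cast
    field_simp
    ring
  have hlim : ∀ l : Filter ℝ, Tendsto (fun t : ℝ => |t|) l atTop → Tendsto
      (fun t : ℝ => -(n + 1 : ℂ)⁻¹ * (((t : ℂ) + Complex.I * u) ^ (n + 1))⁻¹) l (𝓝 0) := by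
    intro l hl
    have hnorm : Tendsto (fun t : ℝ => ‖(t : ℂ) + Complex.I * u‖) l atTop :=
      tendsto_atTop_mono (fun t => by
        simpa using Complex.abs_re_le_norm ((t : ℂ) + Complex.I * u)) hl
    have hinv := tendsto_inv₀_cobounded.comp (tendsto_norm_atTop_iff_cobounded.mp hnorm)
    simpa [Function.comp_def] using (hinv.pow (n + 1)).const_mul (-(n + 1 : ℂ)⁻¹)
  have hint := (holomorphicBoundOn_inv_pow n).integrable_line (u := u) hne
  simpa using integral_of_hasDerivAt_of_tendsto hprim hint
    (hlim _ tendsto_abs_atBot_atTop) (hlim _ tendsto_abs_atTop_atTop)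

lemma integral_line_sub_line_eq_residue_of_triple_pole {f : ℂ → ℂ} {c d : ℝ} {A B R : ℂ}
    (hc : c < 0) (hd : 0 < d)
    (h : HolomorphicBoundOn f (fun t => (t ^ 2)⁻¹) ({w | w.im ∈ Set.Icc c d} \ {0}))
    (hR : Tendsto (fun w => w * (f w - A * (w ^ 3)⁻¹ - B * (w ^ 2)⁻¹)) (𝓝[≠] 0) (𝓝 R)) :
    (∫ t : ℝ, f (t + Complex.I * c)) - ∫ t : ℝ, f (t + Complex.I * d) =
      2 * π * Complex.I * R := by
  have hpole : ∀ (n : ℕ) (a : ℂ), HolomorphicBoundOn (fun w => a * (w ^ (n + 2))⁻¹)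
      (fun t => (t ^ 2)⁻¹) ({w | w.im ∈ Set.Icc c d} \ {0}) := fun n a =>
    ((holomorphicBoundOn_inv_pow n).mono fun _ hw => hw.2).const_mul a
  have hline : ∀ u : ℝ, u ≠ 0 → u ∈ Set.Icc c d →
      ∫ t : ℝ, (f (t + Complex.I * u) - A * ((t + Complex.I * u) ^ 3)⁻¹ -
        B * ((t + Complex.I * u) ^ 2)⁻¹) = ∫ t : ℝ, f (t + Complex.I * u) := by
    intro u hu hucd
    have hmem : ∀ t : ℝ, (t : ℂ) + Complex.I * u ∈ {w : ℂ | w.im ∈ Set.Icc c d} \ {0} := fun t =>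
      ⟨show _ ∈ Set.Icc c d by rwa [ofReal_add_I_mul_im], ofReal_add_I_mul_ne_zero t hu⟩
    rw [integral_sub ((h.sub (hpole 1 A)).integrable_line hmem) ((hpole 0 B).integrable_line hmem),
      integral_sub (h.integrable_line hmem) ((hpole 1 A).integrable_line hmem),
      integral_const_mul, integral_const_mul, integral_line_inv_pow 1 hu,
      integral_line_inv_pow 0 hu, mul_zero, mul_zero, sub_zero, sub_zero]
  have hres := integral_line_sub_line_eq_residue hc hd ((h.sub (hpole 1 A)).sub (hpole 0 B)) hR
  rwa [hline c hc.ne ⟨le_rfl, by linarith⟩, hline d hd.ne' ⟨by linarith, le_rfl⟩] at hres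

end TriplePole

section Liouville

lemma exists_eq_const_of_tendsto_zero {g : ℂ → ℂ} (hg : ∀ u, u ≠ 0 → DifferentiableAt ℂ g u)
    (h0 : Tendsto (fun u => u * g u) (𝓝[≠] 0) (𝓝 0))
    (hinf : Tendsto (fun u => g u / u) (cocompact ℂ) (𝓝 0)) :
    ∃ K, ∀ u, u ≠ 0 → g u = K := by
  obtain ⟨G, hGg, hG0⟩ := exists_eq_differentiableAt_of_tendsto_zero (p := 0)
    (eventually_nhdsWithin_of_forall hg) (by simpa using h0)
  have hG : Differentiable ℂ G := fun u => by
    rcases eq_or_ne u 0 with rfl | hu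
    · exact hG0
    · exact differentiableAt_of_eq_of_ne hGg hu (hg u hu)
  have hslope : Differentiable ℂ (dslope G 0) :=
    differentiableOn_univ.mp
      ((Complex.differentiableOn_dslope univ_mem).mpr hG.differentiableOn)
  have hlim : Tendsto (dslope G 0) (cocompact ℂ) (𝓝 0) := by
    have hconst : Tendsto (fun u : ℂ => G 0 / u) (cocompact ℂ) (𝓝 0) := by
      simpa [div_eq_mul_inv, ← Metric.cobounded_eq_cocompact] using
        tendsto_inv₀_cobounded.const_mul (G 0)
    have hsub := hinf.sub hconst
    rw [sub_zero] at hsub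
    refine hsub.congr' ?_
    filter_upwards [(Set.finite_singleton (0 : ℂ)).isCompact.compl_mem_cocompact] with u hu
    rw [dslope_of_ne _ hu, slope_def_field, hGg u hu, sub_zero, sub_div]
  refine ⟨G 0, fun u hu => ?_⟩
  have hzero := hslope.apply_eq_of_tendsto_cocompact u hlim
  rw [dslope_of_ne _ hu, slope_def_field, sub_zero, div_eq_zero_iff] at hzero
  rw [← hGg u hu]
  exact sub_eq_zero.mp (hzero.resolve_right hu)

lemma exists_eq_const_of_norm_le_exp_log {g : ℂ → ℂ} {C c : ℝ} (hc : c < 1)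
    (hg : ∀ u, u ≠ 0 → DifferentiableAt ℂ g u)
    (hC : ∀ u, u ≠ 0 → ‖g u‖ ≤ C * Real.exp (c * |Real.log ‖u‖|)) :
    ∃ K, ∀ u, u ≠ 0 → g u = K := by
  have hdecay : ∀ {l : Filter ℂ}, Tendsto (fun u : ℂ => |Real.log ‖u‖|) l atTop →
      Tendsto (fun u : ℂ => C * Real.exp ((c - 1) * |Real.log ‖u‖|)) l (𝓝 0) := fun hl => by
    simpa using (Real.tendsto_exp_atBot.comp
      (hl.const_mul_atTop_of_neg (sub_neg.mpr hc))).const_mul C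
  have hlog0 : Tendsto (fun u : ℂ => Real.log ‖u‖) (𝓝[≠] 0) atBot :=
    Real.tendsto_log_nhdsGT_zero.comp tendsto_norm_nhdsNE_zero
  have hlog_inf : Tendsto (fun u : ℂ => Real.log ‖u‖) (cocompact ℂ) atTop :=
    Real.tendsto_log_atTop.comp tendsto_norm_cocompact_atTop
  refine exists_eq_const_of_tendsto_zero hg
    (squeeze_zero_norm' ?_ (hdecay (tendsto_abs_atBot_atTop.comp hlog0)))
    (squeeze_zero_norm' ?_ (hdecay (tendsto_abs_atTop_atTop.comp hlog_inf)))
  · filter_upwards [hlog0.eventually_lt_atBot 0, self_mem_nhdsWithin] with u hu hu0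
    have hexp : ‖u‖ = Real.exp (-|Real.log ‖u‖|) := by
      rw [abs_of_neg hu, neg_neg, Real.exp_log (norm_pos_iff.mpr hu0)]
    calc ‖u * g u‖ ≤ Real.exp (-|Real.log ‖u‖|) * (C * Real.exp (c * |Real.log ‖u‖|)) := by
          rw [norm_mul, ← hexp]
          gcongr
          exact hC u hu0
      _ = _ := by rw [mul_left_comm, ← Real.exp_add]; ring_nf
  · filter_upwards [hlog_inf.eventually_gt_atTop 0] with u hu
    have hu0 : u ≠ 0 := by
      rintro rfl
      simp at hu
    have hexp : ‖u‖⁻¹ = Real.exp (-|Real.log ‖u‖|) := by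
      rw [abs_of_pos hu, Real.exp_neg, Real.exp_log (norm_pos_iff.mpr hu0)]
    calc ‖g u / u‖ ≤ C * Real.exp (c * |Real.log ‖u‖|) * Real.exp (-|Real.log ‖u‖|) := by
          rw [norm_div, div_eq_mul_inv, ← hexp]
          gcongr
          exact hC u hu0
      _ = _ := by rw [mul_assoc, ← Real.exp_add]; ring_nf

variable {f : ℂ → ℂ} {κ σ : ℝ}

lemma mul_log_im (κ : ℝ) (u : ℂ) : ((κ : ℂ) * Complex.log u).im = κ * u.arg := by
  rw [Complex.im_ofReal_mul, Complex.log_im]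

lemma log_eq_log_neg_add_or_sub {u : ℂ} (hu : u ≠ 0) :
    Complex.log u = Complex.log (-u) + π * Complex.I ∨
      Complex.log u = Complex.log (-u) - π * Complex.I := by
  have hexp : Complex.exp (Complex.log (-u)) = -u := Complex.exp_log (neg_ne_zero.mpr hu)
  have hlower := Complex.neg_pi_lt_arg (-u)
  have hupper := Complex.arg_le_pi (-u)
  rcases le_or_gt (-u).arg 0 with harg | harg
  · left
    have him : (Complex.log (-u) + π * Complex.I).im = (-u).arg + π := by simp [Complex.log_im]
    rw [← Complex.log_exp (x := Complex.log (-u) + π * Complex.I), Complex.exp_add, hexp,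
      Complex.exp_pi_mul_I]
    · simp
    all_goals rw [him]; linarith
  · right
    have him : (Complex.log (-u) - π * Complex.I).im = (-u).arg - π := by simp [Complex.log_im]
    rw [← Complex.log_exp (x := Complex.log (-u) - π * Complex.I), Complex.exp_sub, hexp,
      Complex.exp_pi_mul_I]
    · simp
    all_goals rw [him]; linarith

lemma differentiableAt_comp_log_of_periodic (hκ : 0 < κ) (hσ : κ * π < σ)
    (hd : ∀ z, |z.im| < σ → DifferentiableAt ℂ f z)
    (hper : ∀ z, |z.im| < σ - κ * π → f (z + κ * π * Complex.I) = f (z - κ * π * Complex.I))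
    {u : ℂ} (hu : u ≠ 0) :
    DifferentiableAt ℂ (fun u => f (κ * Complex.log u)) u := by
  by_cases hslit : u ∈ Complex.slitPlane
  · refine (hd _ ?_).comp u ((differentiableAt_id.clog hslit).const_mul (κ : ℂ))
    simp only [mul_log_im, abs_mul, abs_of_pos hκ]
    exact lt_of_le_of_lt (by gcongr; exact Complex.abs_arg_le_pi u) hσ
  obtain ⟨hre, him⟩ : u.re < 0 ∧ u.im = 0 := by
    rw [Complex.mem_slitPlane_iff] at hslit
    push Not at hslit
    exact ⟨hslit.1.lt_of_ne fun hre => hu (Complex.ext hre hslit.2), hslit.2⟩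
  have hneg : -u ∈ Complex.slitPlane := Or.inl (by simpa using hre)
  have harg : (-u).arg = 0 := Complex.arg_eq_zero_iff.mpr (by simp [him, hre.le])
  have hcont : ContinuousAt (fun v : ℂ => |κ * (-v).arg|) u :=
    (((Complex.continuousAt_arg hneg).comp (f := fun v : ℂ => -v) continuousAt_neg).const_mul κ).abs
  have hnear : ∀ᶠ v in 𝓝 u, |κ * (-v).arg| < σ - κ * π :=
    hcont.eventually_lt continuousAt_const (by simpa [harg] using hσ)
  have heq : (fun u => f (κ * Complex.log u)) =ᶠ[𝓝 u]
      fun v => f (κ * Complex.log (-v) + κ * π * Complex.I) := by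
    filter_upwards [hnear, eventually_ne_nhds hu] with v hv hv0
    rcases log_eq_log_neg_add_or_sub hv0 with hlog | hlog
    · rw [hlog, mul_add, mul_assoc]
    · rw [hlog, mul_sub, ← mul_assoc, ← hper _ (by rwa [mul_log_im])]
  rw [heq.differentiableAt_iff]
  refine (hd _ ?_).comp u (((differentiableAt_id.neg.clog hneg).const_mul (κ : ℂ)).add_const _)
  simpa [Complex.log_im, harg, abs_of_pos hκ, abs_of_pos Real.pi_pos] using hσ

lemma exists_eq_const_of_periodic_of_norm_le_exp {C c : ℝ} (hκ : 0 < κ) (hσ : κ * π < σ)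
    (hc : c < 1) (hd : ∀ z, |z.im| < σ → DifferentiableAt ℂ f z)
    (hper : ∀ z, |z.im| < σ - κ * π → f (z + κ * π * Complex.I) = f (z - κ * π * Complex.I))
    (hC : ∀ z, |z.im| ≤ κ * π → ‖f z‖ ≤ C * Real.exp (c / κ * |z.re|)) :
    ∃ K, ∀ z, |z.im| < σ → f z = K := by
  obtain ⟨K, hK⟩ := exists_eq_const_of_norm_le_exp_log hc
    (fun u hu => differentiableAt_comp_log_of_periodic hκ hσ hd hper hu) (C := C) fun u _ => by
      refine (hC _ ?_).trans (le_of_eq ?_)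
      · rw [mul_log_im, abs_mul, abs_of_pos hκ]
        gcongr
        exact Complex.abs_arg_le_pi u
      · rw [Complex.re_ofReal_mul, Complex.log_re, abs_mul, abs_of_pos hκ]
        field_simp
  have hκ0 : (κ : ℂ) ≠ 0 := mod_cast hκ.ne'
  have hinner : ∀ z : ℂ, |z.im| < κ * π → f z = K := by
    intro z hz
    have hz' : |(z / κ).im| < π := by
      rw [Complex.div_ofReal_im, abs_div, abs_of_pos hκ, div_lt_iff₀ hκ]
      linarith
    have h := hK (Complex.exp (z / κ)) (Complex.exp_ne_zero _)
    rwa [Complex.log_exp (abs_lt.mp hz').1 (abs_lt.mp hz').2.le, mul_div_cancel₀ _ hκ0] at h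
  have hopen : ∀ r : ℝ, IsOpen {z : ℂ | |z.im| < r} :=
    fun r => isOpen_lt (by fun_prop) continuous_const
  have hconvex : Convex ℝ {z : ℂ | |z.im| < σ} := by
    rw [show {z : ℂ | |z.im| < σ} = Complex.imLm ⁻¹' Set.Ioo (-σ) σ by ext z; simp [abs_lt]]
    exact (convex_Ioo (-σ) σ).linear_preimage _
  have hfK : f =ᶠ[𝓝 0] fun _ => K :=
    ((hopen (κ * π)).eventually_mem (by simpa using mul_pos hκ Real.pi_pos)).mono hinner
  have hanalytic : AnalyticOnNhd ℂ f {z : ℂ | |z.im| < σ} :=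
    DifferentiableOn.analyticOnNhd (fun z hz => (hd z hz).differentiableWithinAt) (hopen σ)
  exact ⟨K, fun z hz => hanalytic.eqOn_of_preconnected_of_eventuallyEq analyticOnNhd_const
    hconvex.isPreconnected (by simpa using (mul_pos hκ Real.pi_pos).trans hσ) hfK hz⟩

end Liouville

section Abelian

lemma integrable_exp_neg_mul_mul_heaviside {η : ℝ} (hη : 0 < η) :
    Integrable fun y : ℝ => Complex.exp (-η * y) * Set.indicator (Set.Ioi 0) 1 y := by
  have h := integrableOn_exp_mul_complex_Ioi (a := -(η : ℂ)) (by simpa using hη) 0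
  refine ((integrable_indicator_iff measurableSet_Ioi).mpr h).congr (ae_of_all _ fun y => ?_)
  simp [Set.indicator_apply]

lemma integral_exp_neg_mul_mul_heaviside {η : ℝ} (hη : 0 < η) :
    ∫ y : ℝ, Complex.exp (-η * y) * Set.indicator (Set.Ioi 0) 1 y = (η : ℂ)⁻¹ := by
  have h := integral_exp_mul_complex_Ioi (a := -(η : ℂ)) (by simpa using hη) 0
  rw [← integral_indicator measurableSet_Ioi] at h
  simpa [Set.indicator_apply, Pi.one_def] using h

lemma norm_exp_neg_mul_mul_le {η m C y : ℝ} {g : ℂ} (hη : |η| ≤ m / 2)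
    (hg : ‖g‖ ≤ C * Real.exp (-(m * |y|))) :
    ‖Complex.exp (-η * y) * g‖ ≤ C * Real.exp (-(m / 2 * |y|)) := by
  have hexp : -η * y ≤ m / 2 * |y| := by
    rw [neg_mul]
    exact (neg_le_abs _).trans ((abs_mul _ _).trans_le (by gcongr))
  rw [norm_mul, ← Complex.ofReal_neg, ← Complex.ofReal_mul, Complex.norm_exp_ofReal]
  calc Real.exp (-η * y) * ‖g‖ ≤ Real.exp (m / 2 * |y|) * (C * Real.exp (-(m * |y|))) :=
        mul_le_mul (Real.exp_le_exp.mpr hexp) hg (norm_nonneg _) (Real.exp_pos _).le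
    _ = C * Real.exp (-(m / 2 * |y|)) := by
        rw [mul_left_comm, ← Real.exp_add]
        ring_nf

lemma tendsto_mul_integral_exp_neg_mul {h : ℝ → ℂ} (hh : Continuous h) {C m : ℝ} (hm : 0 < m)
    (hC : ∀ y, ‖h y - Set.indicator (Set.Ioi 0) 1 y‖ ≤ C * Real.exp (-(m * |y|))) :
    Tendsto (fun η : ℝ => (η : ℂ) * ∫ y : ℝ, Complex.exp (-η * y) * h y) (𝓝[>] 0) (𝓝 1) := by
  set θ : ℝ → ℂ := Set.indicator (Set.Ioi 0) 1
  have hbound := (integrable_exp_neg_mul_abs (half_pos hm)).const_mul C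
  have hnorm : ∀ {η : ℝ}, 0 < η → η ≤ m / 2 → ∀ y : ℝ,
      ‖Complex.exp (-η * y) * (h y - θ y)‖ ≤ C * Real.exp (-(m / 2 * |y|)) := fun hη hηm y =>
    norm_exp_neg_mul_mul_le (by rwa [abs_of_pos hη]) (hC y)
  have hlaplace : ∀ {η : ℝ}, 0 < η → η ≤ m / 2 →
      (η : ℂ) * ∫ y : ℝ, Complex.exp (-η * y) * h y =
        1 + η * ∫ y : ℝ, Complex.exp (-η * y) * (h y - θ y) := by
    intro η hη hηm
    have hmeas : AEStronglyMeasurable (fun y : ℝ => Complex.exp (-η * y) * (h y - θ y)) :=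
      (Continuous.aestronglyMeasurable (by fun_prop)).mul (hh.aestronglyMeasurable.sub
        (aestronglyMeasurable_one.indicator measurableSet_Ioi))
    have hsplit : ∀ y : ℝ, Complex.exp (-η * y) * h y =
        Complex.exp (-η * y) * θ y + Complex.exp (-η * y) * (h y - θ y) := fun y => by ring
    simp_rw [hsplit]
    rw [integral_add (integrable_exp_neg_mul_mul_heaviside hη)
      (hbound.mono' hmeas (ae_of_all _ (hnorm hη hηm))), integral_exp_neg_mul_mul_heaviside hη,
      mul_add, mul_inv_cancel₀ (mod_cast hη.ne')]
  have hlim : Tendsto (fun η : ℝ => η * ∫ y : ℝ, C * Real.exp (-(m / 2 * |y|))) (𝓝[>] 0) (𝓝 0) := by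
    simpa using ((continuous_mul_const (M := ℝ) _).tendsto 0).mono_left nhdsWithin_le_nhds
  rw [tendsto_iff_norm_sub_tendsto_zero]
  refine squeeze_zero' (Eventually.of_forall fun _ => norm_nonneg _) ?_ hlim
  filter_upwards [Ioc_mem_nhdsGT (half_pos hm)] with η ⟨hη, hηm⟩
  rw [hlaplace hη hηm, add_sub_cancel_left, norm_mul, Complex.norm_real, Real.norm_of_nonneg hη.le]
  gcongr
  exact norm_integral_le_of_norm_le hbound (ae_of_all _ (hnorm hη hηm))

end Abelian

section InverseSinh

lemma sinh_abs_re_le_norm_sinh (w : ℂ) : Real.sinh |w.re| ≤ ‖Complex.sinh w‖ := by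
  have h := abs_norm_sub_norm_le (Complex.exp w) (Complex.exp (-w))
  rw [Complex.norm_exp, Complex.norm_exp, Complex.neg_re] at h
  rw [← Real.abs_sinh, Real.sinh_eq, Complex.sinh, norm_div, abs_div, Complex.norm_ofNat,
    Nat.abs_ofNat]
  gcongr

variable {β : ℝ}

lemma sinh_ofReal_mul_ne_zero (hβ : 0 < β) {w : ℂ} (hw : |w.im| < π / β) (hw0 : w ≠ 0) :
    Complex.sinh (β * w) ≠ 0 := by
  intro hsinh
  have hsin : Complex.sin (β * w * Complex.I) = 0 := by rw [Complex.sin_mul_I, hsinh, zero_mul]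
  obtain ⟨k, hk⟩ := Complex.sin_eq_zero_iff.mp hsin
  have him : |β * w.im| = |(k : ℝ)| * π := by
    have hre : -(β * w.im) = k * π := by simpa using congrArg Complex.re hk
    rw [← abs_neg, hre, abs_mul, abs_of_pos Real.pi_pos]
  have hk0 : k = 0 := by
    rw [abs_mul, abs_of_pos hβ] at him
    rw [lt_div_iff₀' hβ, him, mul_lt_iff_lt_one_left Real.pi_pos] at hw
    exact Int.abs_lt_one_iff.mp (mod_cast hw)
  simp [hk0, hβ.ne', hw0] at hk

lemma expDecayOn_inv_sinh (hβ : 0 < β) :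
    ExpDecayOn (fun w => (Complex.sinh (β * w))⁻¹) β ({w | |w.im| < π / β} \ {0}) := by
  refine ⟨fun w hw => DifferentiableAt.inv (by fun_prop) (sinh_ofReal_mul_ne_zero hβ hw.1 hw.2),
    ((1 - Real.exp (-(2 * β))) / 2)⁻¹, fun w _ hre => ?_⟩
  have hgap : 0 < 1 - Real.exp (-(2 * β)) :=
    sub_pos.mpr (Real.exp_lt_one_iff.mpr (by linarith))
  rw [norm_inv, Real.exp_neg (β * |w.re|), ← mul_inv]
  refine inv_anti₀ (by positivity) ?_
  calc (1 - Real.exp (-(2 * β))) / 2 * Real.exp (β * |w.re|)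
      = (Real.exp (β * |w.re|) - Real.exp (-(2 * β) + β * |w.re|)) / 2 := by
        rw [Real.exp_add]
        ring
    _ ≤ (Real.exp (β * |w.re|) - Real.exp (-(β * |w.re|))) / 2 := by
        gcongr
        nlinarith
    _ = Real.sinh |((β : ℂ) * w).re| := by
        rw [Complex.re_ofReal_mul, abs_mul, abs_of_pos hβ, Real.sinh_eq]
    _ ≤ ‖Complex.sinh (β * w)‖ := sinh_abs_re_le_norm_sinh _

lemma expDecayOn_inv : ExpDecayOn (fun w => w⁻¹) 0 {0}ᶜ := by
  refine ⟨fun w hw => differentiableAt_inv hw, 1, fun w _ hre => ?_⟩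
  simpa using inv_le_one_of_one_le₀ (hre.trans (Complex.abs_re_le_norm w))

lemma tendsto_mul_inv_sinh (hβ : β ≠ 0) :
    Tendsto (fun w : ℂ => w * (Complex.sinh (β * w))⁻¹) (𝓝[≠] 0) (𝓝 (β : ℂ)⁻¹) := by
  have hderiv : HasDerivAt (fun w : ℂ => Complex.sinh (β * w)) β 0 := by
    simpa using ((hasDerivAt_id (0 : ℂ)).const_mul (β : ℂ)).csinh
  refine ((hasDerivAt_iff_tendsto_slope.mp hderiv).inv₀ (mod_cast hβ)).congr fun w => ?_
  simp [slope_def_field, div_eq_mul_inv]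

variable {ε : ℝ} {z : ℂ}

lemma expDecayOn_inv_sinh_line (hβ : 0 < β) (hε : 0 < ε) (hεβ : ε < π / β) :
    ExpDecayOn (fun w => (Complex.sinh (β * w))⁻¹) β {w | w.im = ε} := by
  refine (expDecayOn_inv_sinh hβ).mono fun w (hw : w.im = ε) => ⟨?_, ?_⟩
  · simpa [hw, abs_of_pos hε] using hεβ
  · rintro rfl
    exact hε.ne hw

lemma expDecayOn_inv_mul_sinh_line (hβ : 0 < β) (hε : 0 < ε) (hεβ : ε < π / β) :
    ExpDecayOn (fun w => (w * Complex.sinh (β * w))⁻¹) β {w | w.im = ε} := by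
  have hinv : ExpDecayOn (fun w => w⁻¹) 0 {w | w.im = ε} :=
    expDecayOn_inv.mono fun w (hw : w.im = ε) => by
      rintro rfl
      exact hε.ne hw
  simpa [mul_comm] using hinv.mul_exp (expDecayOn_inv_sinh_line hβ hε hεβ)

lemma tendsto_mul_exp_mul_inv_sinh (hβ : β ≠ 0) (c : ℂ) :
    Tendsto (fun w => w * (Complex.exp (c * w) * (Complex.sinh (β * w))⁻¹)) (𝓝[≠] 0)
      (𝓝 (β : ℂ)⁻¹) := by
  have hexp : Tendsto (fun w => Complex.exp (c * w)) (𝓝[≠] 0) (𝓝 1) :=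
    (Continuous.tendsto' (by fun_prop) _ _ (by simp)).mono_left nhdsWithin_le_nhds
  simpa [mul_left_comm] using hexp.mul (tendsto_mul_inv_sinh hβ)

/-- Shifting the contour by the antiperiod `iπ/β` across the pole at `0` reproduces the
integral up to the factor `-e^{-2πz/β}`. -/
lemma lineTransform_inv_sinh_mul (hβ : 0 < β) (hε : 0 < ε) (hεβ : ε < π / β)
    (hz : 2 * |z.im| < β) :
    lineTransform (fun w => (Complex.sinh (β * w))⁻¹) ε z * (1 + Complex.exp (-(2 * π * z / β))) =
      -(2 * π * Complex.I / β) := by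
  have hβ0 : (β : ℂ) ≠ 0 := mod_cast hβ.ne'
  set g : ℂ → ℂ := fun w => Complex.exp (-2 * Complex.I * z * w) * (Complex.sinh (β * w))⁻¹ with hg
  have hshift : ∀ t : ℝ, g (t + Complex.I * (ε - π / β : ℝ)) =
      -Complex.exp (-(2 * π * z / β)) * g (t + Complex.I * ε) := fun t => by
    have hsinh : (β : ℂ) * (t + Complex.I * (ε - π / β : ℝ)) =
        β * (t + Complex.I * ε) - π * Complex.I := by
      push_cast
      field_simp
      ring
    have hexp : -2 * Complex.I * z * (t + Complex.I * (ε - π / β : ℝ)) =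
        -(2 * π * z / β) + -2 * Complex.I * z * (t + Complex.I * ε) := by
      push_cast
      linear_combination (2 * z * (π / β)) * Complex.I_sq
    simp only [hg]
    rw [hsinh, hexp, Complex.exp_add, Complex.sinh_sub, Complex.sinh_mul_I, Complex.cosh_mul_I,
      Complex.cos_pi, Complex.sin_pi, zero_mul, mul_zero, sub_zero, mul_neg_one, inv_neg]
    ring
  have hg_decay : HolomorphicBoundOn g (fun t => (t ^ 2)⁻¹)
      ({w | w.im ∈ Set.Icc (ε - π / β) ε} \ {0}) := by
    refine HolomorphicBoundOn.of_exp (s := -(2 * |z.im|) + β) (.mul_exp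
      ((expDecayOn_exp z (π / β)).mono ?_) ((expDecayOn_inv_sinh hβ).mono ?_)) (by linarith)
    · rintro w ⟨⟨h₁, h₂⟩, -⟩
      change |w.im| ≤ π / β
      rw [abs_le]
      constructor <;> linarith
    · rintro w ⟨⟨h₁, h₂⟩, h₀⟩
      refine ⟨show |w.im| < π / β from ?_, h₀⟩
      rw [abs_lt]
      constructor <;> linarith
  have h := integral_line_sub_line_eq_residue (by linarith) hε hg_decay
    (tendsto_mul_exp_mul_inv_sinh hβ.ne' _)
  simp_rw [hshift] at h
  rw [integral_const_mul] at h
  rw [lineTransform]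
  linear_combination -h

lemma hasDerivAt_lineTransform_inv_mul_sinh (hβ : 0 < β) (hε : 0 < ε) (hεβ : ε < π / β)
    (hz : 2 * |z.im| < β) :
    HasDerivAt (lineTransform (fun w => (w * Complex.sinh (β * w))⁻¹) ε)
      (-2 * Complex.I * lineTransform (fun w => (Complex.sinh (β * w))⁻¹) ε z) z := by
  convert hasDerivAt_lineTransform (expDecayOn_inv_mul_sinh_line hβ hε hεβ) hz using 2
  refine integral_congr_ae (ae_of_all _ fun t => ?_)
  have hne := ofReal_add_I_mul_ne_zero t hε.ne'
  simp only [mul_inv, mul_inv_cancel_left₀ hne]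

lemma hasDerivAt_exp_lineTransform_div (hβ : 0 < β) (hε : 0 < ε) (hεβ : ε < π / β)
    (hz : 2 * |z.im| < β) :
    HasDerivAt (fun z => Complex.exp (-(1 / 2) * lineTransform
      (fun w => (w * Complex.sinh (β * w))⁻¹) ε z) / (1 + Complex.exp (2 * π * z / β))) 0 z := by
  have hβ0 : (β : ℂ) ≠ 0 := mod_cast hβ.ne'
  have hJ := lineTransform_inv_sinh_mul hβ hε hεβ hz
  set J := lineTransform (fun w => (Complex.sinh (β * w))⁻¹) ε z
  set q := Complex.exp (2 * π * z / β) with hq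
  have hJq : J * (q + 1) = -(2 * π * Complex.I / β) * q := by
    rw [← hJ, mul_assoc, add_mul, one_mul, ← Complex.exp_add, neg_add_cancel, Complex.exp_zero]
  have hq1 : 1 + q ≠ 0 := by
    intro h
    have : J * (q + 1) ≠ 0 := by
      rw [hJq]
      simp [hβ0, Real.pi_ne_zero, hq]
    exact this (by rw [add_comm, h, mul_zero])
  have hnum := ((hasDerivAt_lineTransform_inv_mul_sinh hβ hε hεβ hz).const_mul
    (-(1 / 2) : ℂ)).cexp
  have hden : HasDerivAt (fun z : ℂ => 1 + Complex.exp (2 * π * z / β)) (q * (2 * π / β)) z := by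
    simpa using ((((hasDerivAt_id z).const_mul (2 * π : ℂ)).div_const (β : ℂ)).cexp).const_add 1
  refine (hnum.div hden hq1).congr_deriv ?_
  rw [div_eq_zero_iff]
  left
  linear_combination (Complex.exp _ * Complex.I) * hJq -
    (Complex.exp _ * (2 * π / β) * q) * Complex.I_sq

lemma tendsto_exp_lineTransform_div (hβ : 0 < β) (hε : 0 < ε) (hεβ : ε < π / β)
    (hz : 2 * |z.im| < β) :
    Tendsto (fun r : ℝ => Complex.exp (-(1 / 2) * lineTransform
      (fun w => (w * Complex.sinh (β * w))⁻¹) ε (z + r)) /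
        (1 + Complex.exp (2 * π * (z + r) / β))) atBot (𝓝 1) := by
  obtain ⟨C, hC⟩ := exists_norm_lineTransform_le (expDecayOn_inv_mul_sinh_line hβ hε hεβ) hz
  have hre : Tendsto (fun r : ℝ => z.re + r) atBot atBot :=
    tendsto_atBot_add_const_left _ _ tendsto_id
  have hS : Tendsto (fun r : ℝ => lineTransform (fun w => (w * Complex.sinh (β * w))⁻¹) ε (z + r))
      atBot (𝓝 0) := by
    refine squeeze_zero_norm (a := fun r : ℝ => C * Real.exp (2 * ε * (z.re + r)))
      (fun r => by simpa using hC (z + r) (by simp)) ?_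
    simpa using (Real.tendsto_exp_atBot.comp
      (hre.const_mul_atBot (by positivity : 0 < 2 * ε))).const_mul C
  have hq : Tendsto (fun r : ℝ => Complex.exp (2 * π * (z + r) / β)) atBot (𝓝 0) := by
    rw [tendsto_exp_nhds_zero_iff]
    have hscale : ∀ r : ℝ, (2 * π * (z + r) / β).re = 2 * π / β * (z.re + r) := fun r => by
      rw [mul_div_right_comm, ← Complex.ofReal_ofNat, ← Complex.ofReal_mul, ← Complex.ofReal_div,
        Complex.re_ofReal_mul]
      simp
    simp_rw [hscale]
    exact hre.const_mul_atBot (by positivity)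
  simpa [Pi.div_def] using ((hS.const_mul (-(1 / 2) : ℂ)).cexp).div (hq.const_add 1) (by simp)

lemma exp_lineTransform_inv_mul_sinh (hβ : 0 < β) (hε : 0 < ε) (hεβ : ε < π / β)
    (hz : 2 * |z.im| < β) :
    Complex.exp (-(1 / 2) * lineTransform (fun w => (w * Complex.sinh (β * w))⁻¹) ε z) =
      1 + Complex.exp (2 * π * z / β) := by
  set G : ℂ → ℂ := fun z => Complex.exp (-(1 / 2) * lineTransform
    (fun w => (w * Complex.sinh (β * w))⁻¹) ε z) / (1 + Complex.exp (2 * π * z / β))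
  have hderiv : ∀ r : ℝ, HasDerivAt (fun r : ℝ => G (z + r)) 0 r := fun r => by
    exact ((hasDerivAt_exp_lineTransform_div hβ hε hεβ (z := z + r) (by simpa)).comp_const_add
      z (r : ℂ)).comp_ofReal
  have hconst : ∀ r : ℝ, G (z + r) = G z := fun r => by
    simpa using is_const_of_deriv_eq_zero (fun r => (hderiv r).differentiableAt)
      (fun r => (hderiv r).deriv) r 0
  have hG : G z = 1 := by
    exact tendsto_nhds_unique (tendsto_const_nhds.congr fun r => (hconst r).symm)
      (tendsto_exp_lineTransform_div hβ hε hεβ hz)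
  exact (div_eq_one_iff_eq fun h => by simp [G, h] at hG).mp hG

end InverseSinh

section TaylorLimits

lemma tendsto_exp_sub_sum_div_pow (c : ℂ) (n : ℕ) :
    Tendsto (fun w =>
      (Complex.exp (c * w) - ∑ i ∈ Finset.range n, (c * w) ^ i / i.factorial) / w ^ n) (𝓝[≠] 0)
      (𝓝 (c ^ n / n.factorial)) := by
  have hcw : Tendsto (fun w => c * w) (𝓝[≠] 0) (𝓝 0) :=
    (Continuous.tendsto' (by fun_prop) _ _ (mul_zero c)).mono_left nhdsWithin_le_nhds
  have hO : (fun w => (c * w) ^ n) =O[𝓝[≠] 0] fun w => w ^ n :=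
    .of_bound (‖c‖ ^ n) (Eventually.of_forall fun w => by simp [mul_pow])
  have ho := ((Complex.exp_sub_sum_range_succ_isLittleO_pow n).comp_tendsto hcw).trans_isBigO hO
  rw [← zero_add (c ^ n / _)]
  refine (ho.tendsto_div_nhds_zero.add_const _).congr' ?_
  filter_upwards [self_mem_nhdsWithin] with w (hw : w ≠ 0)
  simp only [Function.comp_apply, Finset.sum_range_succ]
  field_simp
  ring

lemma tendsto_mul_inv_sinh_sub_one_div_sq {β : ℝ} (hβ : 0 < β) :
    Tendsto (fun w => (β * w * (Complex.sinh (β * w))⁻¹ - 1) / w ^ 2) (𝓝[≠] 0)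
      (𝓝 (-(β : ℂ) ^ 2 / 6)) := by
  have hβ0 : (β : ℂ) ≠ 0 := mod_cast hβ.ne'
  have hexp := (tendsto_exp_sub_sum_div_pow (-β) 3).sub (tendsto_exp_sub_sum_div_pow β 3)
  have h := (hexp.div_const 2).mul (tendsto_mul_inv_sinh hβ.ne')
  have hlim : ((-β : ℂ) ^ 3 / (3 : ℕ).factorial - (β : ℂ) ^ 3 / (3 : ℕ).factorial) / 2 * (β : ℂ)⁻¹ =
      -(β : ℂ) ^ 2 / 6 := by
    rw [show (3 : ℕ).factorial = 6 from rfl]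
    push_cast
    field_simp
    ring
  rw [hlim] at h
  refine h.congr' ?_
  have hsmall : ∀ᶠ w : ℂ in 𝓝[≠] 0, |w.im| < π / β :=
    nhdsWithin_le_nhds ((isOpen_lt (by fun_prop) continuous_const).mem_nhds (by
      simp only [Set.mem_ofPred_eq, zero_im, abs_zero]
      positivity))
  filter_upwards [self_mem_nhdsWithin, hsmall] with w (hw : w ≠ 0) him
  have hsinh := sinh_ofReal_mul_ne_zero hβ him hw
  have hsinh_def : Complex.exp (-β * w) = Complex.exp (β * w) - 2 * Complex.sinh (β * w) := by
    rw [Complex.sinh, neg_mul]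
    ring
  simp only [Finset.sum_range_succ, Finset.sum_range_zero, hsinh_def, pow_zero, pow_one,
    Nat.factorial_zero, Nat.factorial_one, Nat.factorial_two, Nat.cast_one, Nat.cast_ofNat]
  field_simp
  ring

end TaylorLimits

section Dilogarithm

/-- Half of the largest admissible contour height `π min(b, b⁻¹)`; this is the height used in the
definition of `eb`. -/
def dilogHeight (b : ℝ) : ℝ := π * min b b⁻¹ / 2

/-- The kernel whose Fourier-Laplace transform along a horizontal line above `0` is `4 log e_b`. -/
def dilogKernel (b : ℝ) (w : ℂ) : ℂ :=
  (w * Complex.sinh (b * w) * Complex.sinh (b⁻¹ * w))⁻¹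

/-- The logarithm of `e_b` given by its integral representation. -/
def logDilog (b : ℝ) (z : ℂ) : ℂ := 1 / 4 * lineTransform (dilogKernel b) (dilogHeight b) z

lemma eb_eq_exp_logDilog (b : ℝ) (z : ℂ) : eb b z = Complex.exp (logDilog b z) := by
  simp only [eb, ebE, logDilog, lineTransform, ebIntegrand, dilogKernel, dilogHeight,
    div_eq_mul_inv, Complex.ofReal_inv]

variable {b : ℝ} {z w : ℂ}

lemma dilogHeight_pos (hb : 0 < b) : 0 < dilogHeight b :=
  half_pos (mul_pos Real.pi_pos (lt_min hb (inv_pos.mpr hb)))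

lemma dilogHeight_inv (b : ℝ) : dilogHeight b⁻¹ = dilogHeight b := by
  rw [dilogHeight, dilogHeight, inv_inv, min_comm]

lemma dilogHeight_lt_pi_div_inv (hb : 0 < b) : dilogHeight b < π / b⁻¹ := by
  rw [dilogHeight, div_inv_eq_mul, mul_div_assoc]
  gcongr
  linarith [min_le_left b b⁻¹]

lemma dilogHeight_lt_pi_div (hb : 0 < b) : dilogHeight b < π / b := by
  simpa [dilogHeight_inv] using dilogHeight_lt_pi_div_inv (inv_pos.mpr hb)

lemma dilogKernel_inv (b : ℝ) : dilogKernel b⁻¹ = dilogKernel b := by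
  funext w
  simp only [dilogKernel, Complex.ofReal_inv, inv_inv, mul_right_comm]

lemma dilogKernel_neg (b : ℝ) (w : ℂ) : dilogKernel b (-w) = -dilogKernel b w := by
  simp [dilogKernel, Complex.sinh_neg, inv_neg]

lemma logDilog_inv (b : ℝ) : logDilog b⁻¹ = logDilog b := by
  funext z
  rw [logDilog, logDilog, dilogKernel_inv, dilogHeight_inv]

lemma expDecayOn_dilogKernel (hb : 0 < b) :
    ExpDecayOn (dilogKernel b) (b + b⁻¹) ({w | |w.im| ≤ dilogHeight b} \ {0}) := by
  have hinv : ExpDecayOn (fun w => w⁻¹) 0 ({w | |w.im| ≤ dilogHeight b} \ {0}) :=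
    expDecayOn_inv.mono fun w hw => hw.2
  have hsinh : ∀ β : ℝ, 0 < β → dilogHeight b < π / β →
      ExpDecayOn (fun w => (Complex.sinh (β * w))⁻¹) β ({w | |w.im| ≤ dilogHeight b} \ {0}) :=
    fun β hβ h => (expDecayOn_inv_sinh hβ).mono fun w hw => ⟨hw.1.trans_lt h, hw.2⟩
  have h := (hinv.mul_exp (hsinh b hb (dilogHeight_lt_pi_div hb))).mul_exp
    (hsinh b⁻¹ (inv_pos.mpr hb) (dilogHeight_lt_pi_div_inv hb))
  rw [zero_add] at h
  refine (funext fun w => ?_ : dilogKernel b = _) ▸ h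
  rw [dilogKernel, mul_inv, mul_inv]

lemma expDecayOn_dilogKernel_line (hb : 0 < b) :
    ExpDecayOn (dilogKernel b) (b + b⁻¹) {w | w.im = dilogHeight b} :=
  (expDecayOn_dilogKernel hb).mono fun w (hw : w.im = dilogHeight b) =>
    ⟨by simp [hw, abs_of_pos (dilogHeight_pos hb)], by
      rintro rfl
      exact (dilogHeight_pos hb).ne hw⟩

lemma differentiableAt_logDilog (hb : 0 < b) (hz : 2 * |z.im| < b + b⁻¹) :
    DifferentiableAt ℂ (logDilog b) z :=
  (hasDerivAt_lineTransform (expDecayOn_dilogKernel_line hb) hz).differentiableAt.const_mul _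

lemma exists_norm_logDilog_le (hb : 0 < b) {s : ℝ} (hs : 2 * s < b + b⁻¹) :
    ∃ C, ∀ z : ℂ, |z.im| ≤ s → ‖logDilog b z‖ ≤ C * Real.exp (2 * dilogHeight b * z.re) := by
  obtain ⟨C, hC⟩ := exists_norm_lineTransform_le (expDecayOn_dilogKernel_line hb) hs
  refine ⟨‖(1 / 4 : ℂ)‖ * C, fun z hz => ?_⟩
  rw [logDilog, norm_mul, mul_assoc]
  gcongr
  exact hC z hz

lemma two_mul_abs_im_sub_half_lt (hb : 0 < b) (hz : 2 * |z.im| < b⁻¹) :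
    2 * |(z - Complex.I * b / 2).im| < b + b⁻¹ := by
  have him : (Complex.I * b / 2 : ℂ).im = b / 2 := by simp
  rw [Complex.sub_im, him]
  linarith [abs_sub z.im (b / 2), abs_of_pos (half_pos hb)]

lemma two_mul_abs_im_add_half_lt (hb : 0 < b) (hz : 2 * |z.im| < b⁻¹) :
    2 * |(z + Complex.I * b / 2).im| < b + b⁻¹ := by
  have h := two_mul_abs_im_sub_half_lt hb (z := -z) (by simpa using hz)
  rwa [← neg_add', Complex.neg_im, abs_neg] at h

/-- `e^{-2i(z-ib/2)w} - e^{-2i(z+ib/2)w} = -2 sinh(bw) e^{-2izw}` cancels one of the two factors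
`sinh` of the kernel. -/
lemma logDilog_sub_half_sub_logDilog_add_half (hb : 0 < b) (hz : 2 * |z.im| < b⁻¹) :
    logDilog b (z - Complex.I * b / 2) - logDilog b (z + Complex.I * b / 2) =
      -(1 / 2) * lineTransform (fun w => (w * Complex.sinh (b⁻¹ * w))⁻¹) (dilogHeight b) z := by
  have hk := expDecayOn_dilogKernel_line hb
  rw [logDilog, logDilog, ← mul_sub, lineTransform, lineTransform, ← integral_sub
    (integrable_lineTransform hk (two_mul_abs_im_sub_half_lt hb hz))
    (integrable_lineTransform hk (two_mul_abs_im_add_half_lt hb hz)), lineTransform,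
    ← integral_const_mul, ← integral_const_mul]
  refine integral_congr_ae (ae_of_all _ fun t => ?_)
  simp only [dilogKernel]
  have hne := ofReal_add_I_mul_ne_zero t (dilogHeight_pos hb).ne'
  have hsinh : Complex.sinh (b * (t + Complex.I * dilogHeight b)) ≠ 0 :=
    sinh_ofReal_mul_ne_zero hb (by
      rw [ofReal_add_I_mul_im, abs_of_pos (dilogHeight_pos hb)]
      exact dilogHeight_lt_pi_div hb) hne
  set w : ℂ := t + Complex.I * dilogHeight b
  have hexp : Complex.exp (-2 * Complex.I * (z - Complex.I * b / 2) * w) -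
      Complex.exp (-2 * Complex.I * (z + Complex.I * b / 2) * w) =
      -2 * Complex.sinh (b * w) * Complex.exp (-2 * Complex.I * z * w) := by
    rw [show -2 * Complex.I * (z - Complex.I * b / 2) * w = -(b * w) + -2 * Complex.I * z * w by
        linear_combination (b * w) * Complex.I_sq,
      show -2 * Complex.I * (z + Complex.I * b / 2) * w = b * w + -2 * Complex.I * z * w by
        linear_combination (-b * w) * Complex.I_sq,
      Complex.exp_add, Complex.exp_add, Complex.sinh]
    ring
  rw [← sub_mul, hexp, mul_inv, mul_inv, mul_inv]
  field_simp
  ring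

lemma eb_sub_half_eq (hb : 0 < b) (hz : 2 * |z.im| < b⁻¹) :
    eb b (z - Complex.I * b / 2) =
      (1 + Complex.exp (2 * π * b * z)) * eb b (z + Complex.I * b / 2) := by
  have h := exp_lineTransform_inv_mul_sinh (inv_pos.mpr hb) (dilogHeight_pos hb)
    (dilogHeight_lt_pi_div_inv hb) hz
  rw [← logDilog_sub_half_sub_logDilog_add_half hb hz, Complex.exp_sub,
    div_eq_iff (Complex.exp_ne_zero _)] at h
  rw [eb_eq_exp_logDilog, eb_eq_exp_logDilog, h]
  push_cast
  rw [div_inv_eq_mul, mul_right_comm]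

lemma tendsto_mul_exp_mul_dilogKernel_sub (hb : 0 < b) (c : ℂ) :
    Tendsto (fun w => w * (Complex.exp (c * w) * dilogKernel b w - 1 * (w ^ 3)⁻¹ - c * (w ^ 2)⁻¹))
      (𝓝[≠] 0) (𝓝 (c ^ 2 / 2 - ((b : ℂ) ^ 2 + ((b : ℂ)⁻¹) ^ 2) / 6)) := by
  have hb0 : (b : ℂ) ≠ 0 := mod_cast hb.ne'
  set A : ℂ → ℂ := fun w => b * w * (Complex.sinh (b * w))⁻¹ with hA
  set B : ℂ → ℂ := fun w => (b⁻¹ : ℝ) * w * (Complex.sinh ((b⁻¹ : ℝ) * w))⁻¹ with hB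
  have hE : Tendsto (fun w => (Complex.exp (c * w) - 1 - c * w) / w ^ 2) (𝓝[≠] 0)
      (𝓝 (c ^ 2 / 2)) := by
    simpa [Finset.sum_range_succ, sub_sub] using tendsto_exp_sub_sum_div_pow c 2
  have hA1 : Tendsto A (𝓝[≠] 0) (𝓝 1) := by
    simpa [hA, mul_assoc, hb0] using (tendsto_mul_inv_sinh hb.ne').const_mul (b : ℂ)
  have hB1 : Tendsto B (𝓝[≠] 0) (𝓝 1) := by
    simpa [hB, mul_assoc, hb0] using
      (tendsto_mul_inv_sinh (inv_pos.mpr hb).ne').const_mul ((b⁻¹ : ℝ) : ℂ)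
  have hlin : Tendsto (fun w : ℂ => 1 + c * w) (𝓝[≠] 0) (𝓝 1) :=
    (Continuous.tendsto' (by fun_prop) _ _ (by simp)).mono_left nhdsWithin_le_nhds
  have hA2 : Tendsto (fun w => (A w - 1) / w ^ 2) (𝓝[≠] 0) (𝓝 (-(b : ℂ) ^ 2 / 6)) :=
    tendsto_mul_inv_sinh_sub_one_div_sq hb
  have hB2 : Tendsto (fun w => (B w - 1) / w ^ 2) (𝓝[≠] 0) (𝓝 (-((b⁻¹ : ℝ) : ℂ) ^ 2 / 6)) :=
    tendsto_mul_inv_sinh_sub_one_div_sq (inv_pos.mpr hb)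
  have h := (hE.mul (hA1.mul hB1)).add (hlin.mul ((hA2.mul hB1).add hB2))
  have hlim : c ^ 2 / 2 * (1 * 1) + 1 * (-(b : ℂ) ^ 2 / 6 * 1 + -((b⁻¹ : ℝ) : ℂ) ^ 2 / 6) =
      c ^ 2 / 2 - ((b : ℂ) ^ 2 + ((b : ℂ)⁻¹) ^ 2) / 6 := by
    push_cast
    ring
  rw [hlim] at h
  refine h.congr' ?_
  filter_upwards [self_mem_nhdsWithin] with w (hw : w ≠ 0)
  have hk : dilogKernel b w = A w * B w / w ^ 3 := by
    simp only [dilogKernel, hA, hB, mul_inv]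
    push_cast
    field_simp
  rw [hk]
  field_simp
  ring

lemma logDilog_add_logDilog_neg (hb : 0 < b) (hz : 2 * |z.im| < b + b⁻¹) :
    logDilog b z + logDilog b (-z) =
      π * Complex.I * (z ^ 2 + ((b : ℂ) ^ 2 + ((b : ℂ)⁻¹) ^ 2) / 12) := by
  have hneg : logDilog b (-z) =
      -(1 / 4 * lineTransform (dilogKernel b) (-dilogHeight b) z) := by
    rw [logDilog, lineTransform_neg]
    simp only [dilogKernel_neg, lineTransform, mul_neg, integral_neg]
  have hdecay := ((expDecayOn_exp z (dilogHeight b)).mono Set.sdiff_subset).mul_exp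
    (expDecayOn_dilogKernel hb)
  have h := integral_line_sub_line_eq_residue_of_triple_pole
    (neg_neg_of_pos (dilogHeight_pos hb)) (dilogHeight_pos hb)
    ((hdecay.of_exp (by linarith)).mono fun w hw => ⟨abs_le.mpr hw.1, hw.2⟩)
    (tendsto_mul_exp_mul_dilogKernel_sub hb (-2 * Complex.I * z))
  rw [hneg, logDilog, lineTransform, lineTransform]
  linear_combination -(1 / 4) * h - π * Complex.I * z ^ 2 * Complex.I_sq

end Dilogarithm

section WFunction

variable {b : ℝ} {z : ℂ}

lemma wb_eq_exp (hb : 0 < b) (z : ℂ) :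
    wb b z = Complex.exp (π * Complex.I * ((b : ℂ) ^ 2 + ((b : ℂ)⁻¹) ^ 2) / 24 +
      π * Complex.I * z ^ 2 / 2 - logDilog b z) := by
  have hbinv : (b : ℂ) * (b : ℂ)⁻¹ = 1 := mul_inv_cancel₀ (mod_cast hb.ne')
  rw [wb, cb, eb_eq_exp_logDilog, Complex.exp_sub, Complex.exp_add]
  congr 3
  linear_combination (-(π : ℂ) * Complex.I / 24 * ((b : ℂ) + (b : ℂ)⁻¹) ^ 2) * Complex.I_sq +
    (π * Complex.I / 12) * hbinv

lemma wb_eq_exp_logDilog_neg_sub (hb : 0 < b) (hz : 2 * |z.im| < b + b⁻¹) :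
    wb b z = Complex.exp ((logDilog b (-z) - logDilog b z) / 2) := by
  rw [wb_eq_exp hb]
  congr 1
  linear_combination (-1 / 2 : ℂ) * logDilog_add_logDilog_neg hb hz

lemma wb_ne_zero (hb : 0 < b) (z : ℂ) : wb b z ≠ 0 := by
  rw [wb_eq_exp hb]
  exact Complex.exp_ne_zero _

lemma wb_neg (hb : 0 < b) (hz : 2 * |z.im| < b + b⁻¹) : wb b (-z) = (wb b z)⁻¹ := by
  rw [wb_eq_exp_logDilog_neg_sub hb hz, wb_eq_exp_logDilog_neg_sub hb (z := -z) (by simpa using hz),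
    ← Complex.exp_neg, neg_neg, ← neg_div, neg_sub]

lemma differentiableAt_wb (hb : 0 < b) (hz : 2 * |z.im| < b + b⁻¹) :
    DifferentiableAt ℂ (wb b) z := by
  have hL := differentiableAt_logDilog hb hz
  rw [funext (wb_eq_exp hb)]
  fun_prop

lemma wb_add_half (hb : 0 < b) (hz : 2 * |z.im| < b⁻¹) :
    wb b (z + Complex.I * b / 2) =
      2 * Complex.cosh (π * b * z) * wb b (z - Complex.I * b / 2) := by
  have hshift := eb_sub_half_eq hb hz
  have hcosh : 2 * Complex.cosh (π * b * z) =
      Complex.exp (-(π * b * z)) * (1 + Complex.exp (2 * π * b * z)) := by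
    rw [Complex.cosh, mul_add, ← Complex.exp_add]
    ring_nf
  have hgauss : Complex.exp (π * Complex.I * (z + Complex.I * b / 2) ^ 2 / 2) =
      Complex.exp (-(π * b * z)) *
        Complex.exp (π * Complex.I * (z - Complex.I * b / 2) ^ 2 / 2) := by
    rw [← Complex.exp_add]
    congr 1
    linear_combination (π * b * z) * Complex.I_sq
  have hne : ∀ z, eb b z ≠ 0 := fun z => by
    rw [eb_eq_exp_logDilog]
    exact Complex.exp_ne_zero _
  rw [wb, wb, hgauss, hcosh, mul_div_assoc', div_eq_div_iff (hne _) (hne _), hshift]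
  ring

lemma norm_wb (hb : 0 < b) (z : ℂ) :
    ‖wb b z‖ = Real.exp (-(π * z.re * z.im) - (logDilog b z).re) := by
  rw [wb_eq_exp hb, Complex.norm_exp]
  have hconst : (π * Complex.I * ((b : ℂ) ^ 2 + (b : ℂ)⁻¹ ^ 2) / 24 : ℂ) =
      ((π * (b ^ 2 + b⁻¹ ^ 2) / 24 : ℝ) : ℂ) * Complex.I := by
    push_cast
    ring
  have hgauss : (π * Complex.I * z ^ 2 / 2 : ℂ) =
      ((π / 2 : ℝ) : ℂ) * (Complex.I * z ^ 2) := by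
    push_cast
    ring
  rw [hconst, hgauss, Complex.sub_re, Complex.add_re, Complex.re_ofReal_mul,
    Complex.re_ofReal_mul]
  simp [pow_two]
  ring

/-- The integral representation controls `log e_b` in the left half plane; the right half plane is
reached through `w_b(-z) = w_b(z)⁻¹`. -/
lemma exists_norm_wb_le (hb : 0 < b) {s : ℝ} (hs : 2 * s < b + b⁻¹) :
    ∃ C, ∀ z : ℂ, |z.im| ≤ s → ‖wb b z‖ ≤ C * Real.exp (π * |z.re| * z.im) := by
  obtain ⟨C, hC⟩ := exists_norm_logDilog_le hb hs
  have hleft : ∀ z : ℂ, |z.im| ≤ s → z.re ≤ 0 → |(logDilog b z).re| ≤ |C| := by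
    intro z hz hre
    calc |(logDilog b z).re| ≤ C * Real.exp (2 * dilogHeight b * z.re) :=
          (Complex.abs_re_le_norm _).trans (hC z hz)
      _ ≤ |C| * 1 := by
          gcongr
          · exact le_abs_self C
          · exact Real.exp_le_one_iff.mpr
              (mul_nonpos_of_nonneg_of_nonpos (by linarith [dilogHeight_pos hb]) hre)
      _ = |C| := mul_one _
  refine ⟨Real.exp |C|, fun z hz => ?_⟩
  rw [← Real.exp_add]
  rcases le_total z.re 0 with hre | hre
  · rw [norm_wb hb, Real.exp_le_exp, abs_of_nonpos hre]
    linarith [(abs_le.mp (hleft z hz hre)).1]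
  · have hneg := wb_neg hb (z := -z) (by simpa using by linarith)
    rw [neg_neg] at hneg
    rw [hneg, norm_inv, norm_wb hb, ← Real.exp_neg, Real.exp_le_exp, abs_of_nonneg hre,
      Complex.neg_re, Complex.neg_im]
    linarith [(abs_le.mp (hleft (-z) (by simpa using hz) (by simpa using hre))).2]

lemma cb_inv (b : ℝ) : cb b⁻¹ = cb b := by
  rw [cb, cb, Complex.ofReal_inv, inv_inv, add_comm]

lemma cb_im (b : ℝ) : (cb b).im = (b + b⁻¹) / 2 := by
  rw [cb, ← Complex.ofReal_inv, ← Complex.ofReal_add]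
  simp

lemma wb_inv (b : ℝ) : wb b⁻¹ = wb b := by
  funext z
  rw [wb, wb, cb_inv, eb_eq_exp_logDilog, eb_eq_exp_logDilog, logDilog_inv]

lemma conj_logDilog (b : ℝ) (z : ℂ) :
    (starRingEnd ℂ) (logDilog b z) = -logDilog b ((starRingEnd ℂ) z) := by
  rw [logDilog, logDilog, lineTransform, lineTransform, map_mul, ← integral_conj,
    ← integral_neg_eq_self, ← mul_neg, ← integral_neg]
  congr 1
  · simp [map_ofNat]
  refine integral_congr_ae (ae_of_all _ fun t => ?_)
  set ε := dilogHeight b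
  have hline : (starRingEnd ℂ) (((-t : ℝ) : ℂ) + Complex.I * ε) = -(t + Complex.I * ε) := by
    simp only [map_add, map_mul, Complex.conj_I, Complex.conj_ofReal]
    push_cast
    ring
  have hkernel : ∀ w, (starRingEnd ℂ) (dilogKernel b w) = dilogKernel b ((starRingEnd ℂ) w) := by
    intro w
    simp [dilogKernel, ← Complex.sinh_conj]
  simp only [map_mul, hkernel, ← Complex.exp_conj, hline, dilogKernel_neg]
  simp only [map_neg, map_ofNat, Complex.conj_I, neg_mul, mul_neg, neg_neg]

lemma exists_wb_I_mul_eq_ofReal (hb : 0 < b) {y : ℝ} (hy : 2 * |y| < b + b⁻¹) :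
    ∃ r : ℝ, 0 < r ∧ wb b (Complex.I * y) = r := by
  have hconj := conj_logDilog b (Complex.I * y)
  rw [show (starRingEnd ℂ) (Complex.I * y) = -(Complex.I * y) by simp] at hconj
  have hadd := Complex.add_conj (logDilog b (Complex.I * y))
  refine ⟨Real.exp (-(logDilog b (Complex.I * y)).re), Real.exp_pos _, ?_⟩
  rw [wb_eq_exp_logDilog_neg_sub hb (by simpa using hy), Complex.ofReal_exp]
  congr 1
  push_cast at hadd ⊢
  linear_combination (-1 / 2 : ℂ) * hadd + (1 / 2 : ℂ) * hconj

lemma wb_cb_sub_I_mul {η : ℝ} (hb : 0 < b) (hη : 0 < η) (hηb : η < b⁻¹) :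
    wb b (cb b - Complex.I * η) = 2 * Complex.sin (π * b * η) *
      wb b (Complex.I * ((b⁻¹ - b) / 2 : ℝ) - Complex.I * η) := by
  have hshift := wb_add_half hb (z := Complex.I * (b⁻¹ / 2 - η : ℝ)) (by
    have hη_lt : |b⁻¹ / 2 - η| < b⁻¹ / 2 := by
      rw [abs_lt]
      constructor <;> linarith
    rw [Complex.I_mul_im, Complex.ofReal_re]
    linarith)
  have hupper : Complex.I * (b⁻¹ / 2 - η : ℝ) + Complex.I * b / 2 = cb b - Complex.I * η := by
    rw [cb]
    push_cast
    ring
  have hlower : Complex.I * (b⁻¹ / 2 - η : ℝ) - Complex.I * b / 2 =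
      Complex.I * ((b⁻¹ - b) / 2 : ℝ) - Complex.I * η := by
    push_cast
    ring
  have hcosh : Complex.cosh (π * b * (Complex.I * (b⁻¹ / 2 - η : ℝ))) =
      Complex.sin (π * b * η) := by
    have hb0 : (b : ℂ) ≠ 0 := mod_cast hb.ne'
    rw [← Complex.cos_pi_div_two_sub, ← Complex.cosh_mul_I]
    congr 1
    push_cast
    field_simp
  rwa [hupper, hlower, hcosh] at hshift

lemma tendsto_wb_cb_sub_div_mul_wb (hb : 0 < b) :
    Tendsto (fun η : ℝ => wb b (cb b - Complex.I * η) / η) (𝓝[>] 0)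
      (𝓝 (2 * (π * b) * wb b (Complex.I * ((b⁻¹ - b) / 2 : ℝ)))) := by
  set θ := (b⁻¹ - b) / 2 with hθ
  have hbinv := inv_pos.mpr hb
  have hsin : Tendsto (fun η : ℝ => ((Real.sin (π * b * η) / η : ℝ) : ℂ)) (𝓝[>] 0)
      (𝓝 ((π * b : ℝ) : ℂ)) := by
    have hderiv : HasDerivAt (fun η : ℝ => Real.sin (π * b * η)) (π * b) 0 := by
      simpa using ((hasDerivAt_id (0 : ℝ)).const_mul (π * b)).sin
    have hslope := hderiv.tendsto_slope.mono_left (nhdsWithin_mono _ fun _ hx => ne_of_gt hx)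
    exact (Complex.continuous_ofReal.tendsto _).comp
      (hslope.congr fun η => by simp [slope_def_field])
  have hwb : Tendsto (fun η : ℝ => wb b (Complex.I * θ - Complex.I * η)) (𝓝[>] 0)
      (𝓝 (wb b (Complex.I * θ))) := by
    have hθ_lt : |θ| < (b + b⁻¹) / 2 := by rw [abs_lt, hθ]; constructor <;> linarith
    have hcont : ContinuousAt (wb b) (Complex.I * θ) :=
      (differentiableAt_wb hb (by simpa using by linarith)).continuousAt
    exact hcont.tendsto.comp
      ((Continuous.tendsto' (by fun_prop) _ _ (by simp)).mono_left nhdsWithin_le_nhds)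
  have h := (hsin.const_mul 2).mul hwb
  rw [Complex.ofReal_mul] at h
  refine h.congr' ?_
  filter_upwards [Ioo_mem_nhdsGT hbinv] with η hη
  rw [wb_cb_sub_I_mul hb hη.1 hη.2, ← hθ]
  push_cast
  ring

/-- Exchanging `b` and `b⁻¹` inverts `w_b(i(b⁻¹-b)/2) > 0`, so the two expressions for the limit
force `b * w_b(i(b⁻¹-b)/2) = 1`. -/
lemma tendsto_wb_cb_sub_div (hb : 0 < b) :
    Tendsto (fun η : ℝ => wb b (cb b - Complex.I * η) / η) (𝓝[>] 0) (𝓝 (2 * π)) := by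
  have hbinv := inv_pos.mpr hb
  set θ := (b⁻¹ - b) / 2 with hθ
  have hθ_lt : 2 * |θ| < b + b⁻¹ := by
    have : |θ| < (b + b⁻¹) / 2 := by rw [abs_lt]; constructor <;> linarith
    linarith
  obtain ⟨r, hr, hwb⟩ := exists_wb_I_mul_eq_ofReal hb hθ_lt
  have hlim := tendsto_wb_cb_sub_div_mul_wb hb
  have hlim_inv := tendsto_wb_cb_sub_div_mul_wb hbinv
  rw [wb_inv, cb_inv, inv_inv, show (b - b⁻¹) / 2 = -θ by rw [hθ]; ring, Complex.ofReal_neg,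
    mul_neg, wb_neg hb (by simpa using hθ_lt), hwb] at hlim_inv
  rw [← hθ, hwb] at hlim
  have heq : 2 * (π * b) * r = 2 * (π * b⁻¹) * r⁻¹ := by
    exact_mod_cast tendsto_nhds_unique hlim hlim_inv
  have hsq : (b * r) ^ 2 = 1 ^ 2 := by
    field_simp at heq
    linarith
  have hbr : (b : ℂ) * r = 1 := mod_cast (sq_eq_sq₀ (by positivity) one_pos.le).mp hsq
  rwa [mul_assoc, mul_assoc, hbr, mul_one] at hlim

end WFunction

section DFunction

variable {b m : ℝ} {α y : ℂ}

lemma exists_norm_wb_add_le (hb : 0 < b) (α : ℂ) {s : ℝ} (hs : 2 * s < b + b⁻¹) :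
    ∃ C, ∀ y : ℂ, |(y + α).im| ≤ s → ‖wb b (y + α)‖ ≤ C * Real.exp (π * |y.re| * (y + α).im) := by
  obtain ⟨C, hC⟩ := exists_norm_wb_le hb hs
  refine ⟨|C| * Real.exp (π * (|α.re| * s)), fun y hy => (hC _ hy).trans ?_⟩
  have hre : |(|(y + α).re| - |y.re|)| ≤ |α.re| := by
    simpa using abs_abs_sub_abs_le (y + α).re y.re
  have him : |(y + α).re| * (y + α).im ≤ |α.re| * s + |y.re| * (y + α).im := by
    have h := (le_abs_self _).trans ((abs_mul _ _).le.trans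
      (mul_le_mul hre hy (abs_nonneg _) (abs_nonneg _)))
    linarith
  calc C * Real.exp (π * |(y + α).re| * (y + α).im)
      ≤ |C| * Real.exp (π * (|α.re| * s + |y.re| * (y + α).im)) := by
        rw [mul_assoc π]
        gcongr
        exact le_abs_self C
    _ = |C| * Real.exp (π * (|α.re| * s)) * Real.exp (π * |y.re| * (y + α).im) := by
        rw [mul_add, Real.exp_add, mul_assoc π, mul_assoc |C|]

lemma Dfun_ne_zero (hb : 0 < b) (α y : ℂ) : Dfun b α y ≠ 0 :=
  div_ne_zero (wb_ne_zero hb _) (wb_ne_zero hb _)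

lemma Dfun_inv (b : ℝ) : Dfun b⁻¹ = Dfun b := by
  funext α y
  rw [Dfun, Dfun, wb_inv]

lemma Dfun_neg_left (b : ℝ) (α y : ℂ) : Dfun b (-α) y = (Dfun b α y)⁻¹ := by
  rw [Dfun, Dfun, inv_div, sub_neg_eq_add, ← sub_eq_add_neg]

lemma two_mul_abs_im_add_lt (hy : 2 * (|y.im| + |α.im|) < b + b⁻¹) :
    2 * |(y + α).im| < b + b⁻¹ := by
  rw [Complex.add_im]
  linarith [abs_add_le y.im α.im]

lemma two_mul_abs_im_sub_lt (hy : 2 * (|y.im| + |α.im|) < b + b⁻¹) :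
    2 * |(y - α).im| < b + b⁻¹ := by
  simpa [sub_eq_add_neg] using two_mul_abs_im_add_lt (α := -α) (by simpa using hy)

lemma Dfun_eq_mul (hb : 0 < b) (hy : 2 * (|y.im| + |α.im|) < b + b⁻¹) :
    Dfun b α y = wb b (y + α) * wb b (-y + α) := by
  rw [Dfun, neg_add_eq_sub, ← neg_sub y α, wb_neg hb (two_mul_abs_im_sub_lt hy), div_eq_mul_inv]

lemma Dfun_neg (hb : 0 < b) (hy : 2 * (|y.im| + |α.im|) < b + b⁻¹) :
    Dfun b α (-y) = Dfun b α y := by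
  rw [Dfun_eq_mul hb hy, Dfun_eq_mul hb (by simpa using hy), neg_neg, mul_comm]

lemma differentiableAt_Dfun (hb : 0 < b) (hy : 2 * (|y.im| + |α.im|) < b + b⁻¹) :
    DifferentiableAt ℂ (Dfun b α) y :=
  ((differentiableAt_wb hb (two_mul_abs_im_add_lt hy)).comp y
    (differentiableAt_id.add_const α)).div
    ((differentiableAt_wb hb (two_mul_abs_im_sub_lt hy)).comp y
      (differentiableAt_id.sub_const α)) (wb_ne_zero hb _)

lemma exists_norm_Dfun_le (hb : 0 < b) (hm : 2 * (m + |α.im|) < b + b⁻¹) :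
    ∃ C, ∀ y : ℂ, |y.im| ≤ m → ‖Dfun b α y‖ ≤ C * Real.exp (2 * π * α.im * |y.re|) := by
  obtain ⟨C, hC⟩ := exists_norm_wb_add_le hb α hm
  refine ⟨C * C, fun y hy => ?_⟩
  have hpos : |(y + α).im| ≤ m + |α.im| := (abs_add_le _ _).trans (by linarith)
  have hneg : |(-y + α).im| ≤ m + |α.im| :=
    (abs_add_le _ _).trans (by rw [Complex.neg_im, abs_neg]; linarith)
  rw [Dfun_eq_mul hb (by linarith), norm_mul]
  refine (mul_le_mul (hC y hpos) (hC (-y) hneg) (norm_nonneg _)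
    ((norm_nonneg _).trans (hC y hpos))).trans_eq ?_
  rw [mul_mul_mul_comm, ← Real.exp_add]
  congr 2
  simp only [Complex.add_im, Complex.neg_im, Complex.neg_re, abs_neg]
  ring

lemma expDecayOn_Dfun (hb : 0 < b) (hm : 2 * (m + |α.im|) < b + b⁻¹) :
    ExpDecayOn (Dfun b α) (-(2 * π * α.im)) {w | |w.im| ≤ m} := by
  obtain ⟨C, hC⟩ := exists_norm_Dfun_le hb hm
  refine ⟨fun w (hw : |w.im| ≤ m) => differentiableAt_Dfun hb (by linarith), C, fun w hw _ => ?_⟩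
  rw [neg_mul, neg_neg]
  exact hC w hw

lemma Dfun_add_half (hb : 0 < b) (hy : 2 * (|y.im| + |α.im|) < b⁻¹) :
    Dfun b α (y + Complex.I * b / 2) =
      2 * Complex.cosh (π * b * (y + α)) * Dfun b (α - Complex.I * b / 2) y := by
  have hshift := wb_add_half hb (z := y + α)
    (by linarith [show |(y + α).im| ≤ |y.im| + |α.im| from abs_add_le _ _])
  rw [Dfun, Dfun, ← mul_div_assoc, add_sub_assoc', add_right_comm, hshift, sub_sub_eq_add_sub,
    add_sub_right_comm]

lemma Dfun_add_half_mul_cosh (hb : 0 < b) (hy : 2 * (|y.im| + |α.im|) < b⁻¹) :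
    Dfun b α (y + Complex.I * b / 2) * Complex.cosh (π * b * (y - α)) =
      Dfun b α (y - Complex.I * b / 2) * Complex.cosh (π * b * (y + α)) := by
  have him : |(Complex.I * b / 2).im| = b / 2 := by simp [abs_of_pos (half_pos hb)]
  have hsub := abs_sub (y.im) (Complex.I * b / 2).im
  have hsub' := abs_sub (α.im) (Complex.I * b / 2).im
  have heven : Dfun b α (y - Complex.I * b / 2) = Dfun b α (-y + Complex.I * b / 2) := by
    rw [← Dfun_neg hb (by rw [Complex.sub_im]; linarith), neg_sub, neg_add_eq_sub]
  rw [heven, Dfun_add_half hb hy, Dfun_add_half hb (by simpa using hy),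
    Dfun_neg hb (by rw [Complex.sub_im]; linarith), ← Complex.cosh_neg (π * b * (y - α))]
  ring_nf

lemma cosh_mul_add_ne_zero (hb : 0 < b) (hy : 2 * (|y.im| + |α.im|) < b⁻¹) :
    Complex.cosh (π * b * (y + α)) ≠ 0 := by
  have hne := Dfun_ne_zero hb α (y + Complex.I * b / 2)
  rw [Dfun_add_half hb hy] at hne
  exact right_ne_zero_of_mul (left_ne_zero_of_mul hne)

lemma Dfun_mul_exp_eq (hb : 0 < b) (hy : 2 * (|y.im| + |α.im|) < b + b⁻¹) :
    Dfun b α y * Complex.exp (2 * π * Complex.I * α * y) =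
      Complex.exp (logDilog b (-(y + α)) - logDilog b (-(y - α))) := by
  rw [Dfun, ← inv_inv (wb b (y + α)), ← wb_neg hb (two_mul_abs_im_add_lt hy),
    ← inv_inv (wb b (y - α)), ← wb_neg hb (two_mul_abs_im_sub_lt hy), inv_div_inv, wb_eq_exp hb,
    wb_eq_exp hb, ← Complex.exp_sub, ← Complex.exp_add]
  ring_nf

lemma exists_norm_Dfun_mul_exp_sub_one_le (hb : 0 < b) (hα : 2 * |α.im| < b + b⁻¹) :
    ∃ C, ∀ y : ℝ, 0 ≤ y → ‖Dfun b α y * Complex.exp (2 * π * Complex.I * α * y) - 1‖ ≤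
      C * Real.exp (-(2 * dilogHeight b * y)) := by
  have hε := dilogHeight_pos hb
  obtain ⟨K, hK⟩ := exists_norm_logDilog_le hb hα
  set M := |K| * Real.exp (2 * dilogHeight b * |α.re|) with hM
  have hL : ∀ (y : ℝ) (β : ℂ), |β.im| = |α.im| → |β.re| = |α.re| →
      ‖logDilog b (-(y + β))‖ ≤ M * Real.exp (-(2 * dilogHeight b * y)) := fun y β him hre => by
    have hle : (-(y + β)).re ≤ |α.re| - y := by
      rw [← hre, Complex.neg_re, Complex.add_re, Complex.ofReal_re]
      linarith [neg_abs_le β.re]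
    calc ‖logDilog b (-(y + β))‖
        ≤ K * Real.exp (2 * dilogHeight b * (-(y + β)).re) := hK _ (by simp [← him])
      _ ≤ |K| * Real.exp (2 * dilogHeight b * (|α.re| - y)) := by
          gcongr
          exact le_abs_self K
      _ = M * Real.exp (-(2 * dilogHeight b * y)) := by
          rw [hM, mul_assoc |K|, ← Real.exp_add]
          ring_nf
  refine ⟨2 * M * Real.exp (2 * M), fun y hy => ?_⟩
  set u := logDilog b (-(y + α)) - logDilog b (-(y - α))
  have hu : ‖u‖ ≤ 2 * M * Real.exp (-(2 * dilogHeight b * y)) := by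
    have hsub := hL y (-α) (by simp) (by simp)
    rw [← sub_eq_add_neg] at hsub
    linarith [norm_sub_le (logDilog b (-(y + α))) (logDilog b (-(y - α))), hL y α rfl rfl]
  have hu' : ‖u‖ ≤ 2 * M :=
    hu.trans (mul_le_of_le_one_right (by positivity)
      (Real.exp_le_one_iff.mpr (neg_nonpos.mpr (by positivity))))
  rw [Dfun_mul_exp_eq hb (by simpa using hα)]
  calc ‖Complex.exp u - 1‖ ≤ ‖u‖ * Real.exp ‖u‖ := by
        simpa using Complex.norm_exp_sub_sum_le_norm_mul_exp u 1
    _ ≤ 2 * M * Real.exp (-(2 * dilogHeight b * y)) * Real.exp (2 * M) := by gcongr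
    _ = 2 * M * Real.exp (2 * M) * Real.exp (-(2 * dilogHeight b * y)) := mul_right_comm _ _ _

lemma exists_norm_Dfun_mul_exp_sub_heaviside_le (hb : 0 < b) (hα : 2 * |α.im| < b + b⁻¹)
    (hα' : α.im < 0) :
    ∃ m > 0, ∃ C, ∀ y : ℝ, ‖Dfun b α y * Complex.exp (2 * π * Complex.I * α * y) -
      Set.indicator (Set.Ioi 0) 1 y‖ ≤ C * Real.exp (-(m * |y|)) := by
  have hε := dilogHeight_pos hb
  obtain ⟨C₁, hC₁⟩ := exists_norm_Dfun_mul_exp_sub_one_le hb hα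
  obtain ⟨C₂, hC₂⟩ := exists_norm_Dfun_le (m := 0) hb (by simpa using hα)
  set m := min (2 * dilogHeight b) (-(4 * π * α.im))
  refine ⟨m, lt_min (by positivity) (by nlinarith [Real.pi_pos]), max |C₁| |C₂|, fun y => ?_⟩
  rcases lt_or_ge 0 y with hy | hy
  · rw [Set.indicator_of_mem (Set.mem_Ioi.mpr hy), Pi.one_apply, abs_of_pos hy]
    refine (hC₁ y hy.le).trans ?_
    gcongr
    · exact (le_abs_self C₁).trans (le_max_left _ _)
    · exact min_le_left _ _
  · have hre : (2 * π * Complex.I * α * y : ℂ).re = -(2 * π * α.im * y) := by simp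
    rw [Set.indicator_of_notMem (Set.notMem_Ioi.mpr hy), sub_zero, norm_mul, Complex.norm_exp, hre,
      abs_of_nonpos hy]
    calc ‖Dfun b α y‖ * Real.exp (-(2 * π * α.im * y))
        ≤ C₂ * Real.exp (2 * π * α.im * |y|) * Real.exp (-(2 * π * α.im * y)) := by
          gcongr
          exact hC₂ y (by simp)
      _ = C₂ * Real.exp (-(-(4 * π * α.im) * -y)) := by
          rw [mul_assoc, ← Real.exp_add, abs_of_nonpos hy]
          ring_nf
      _ ≤ max |C₁| |C₂| * Real.exp (-(m * -y)) := by
          gcongr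
          · exact (le_abs_self C₂).trans (le_max_right _ _)
          · linarith
          · exact min_le_right _ _

end DFunction

section FourierTransform

variable {b : ℝ} {α a γ x z : ℂ}

/-- The Fourier transform `∫ e^{-2πixy} D_α(y) dy`, as a function of a complex frequency `x`; the
integral converges for `|Im x| < -Im α`. -/
def fourierDfun (b : ℝ) (α x : ℂ) : ℂ := lineTransform (Dfun b α) 0 (π * x)

lemma fourierDfun_eq_integral (b : ℝ) (α x : ℂ) :
    fourierDfun b α x = ∫ y : ℝ, Complex.exp (-2 * π * Complex.I * x * y) * Dfun b α y := by
  simp only [fourierDfun, lineTransform, Complex.ofReal_zero, mul_zero, add_zero]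
  ring_nf

lemma fourierDfun_inv (b : ℝ) : fourierDfun b⁻¹ = fourierDfun b := by
  funext α x
  rw [fourierDfun, fourierDfun, Dfun_inv]

lemma expDecayOn_Dfun_real (hb : 0 < b) (hα : 2 * |α.im| < b + b⁻¹) :
    ExpDecayOn (Dfun b α) (-(2 * π * α.im)) {w | w.im = 0} :=
  (expDecayOn_Dfun hb (m := 0) (by simpa using hα)).mono fun w (hw : w.im = 0) =>
    (abs_eq_zero.mpr hw).le

lemma two_mul_abs_pi_mul_im_lt (hx : |x.im| < -α.im) :
    2 * |((π : ℂ) * x).im| < -(2 * π * α.im) := by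
  rw [Complex.im_ofReal_mul, abs_mul, abs_of_pos Real.pi_pos]
  nlinarith [Real.pi_pos]

lemma integrable_fourierDfun (hb : 0 < b) (hα : 2 * |α.im| < b + b⁻¹) (hx : |x.im| < -α.im) :
    Integrable fun y : ℝ => Complex.exp (-2 * π * Complex.I * x * y) * Dfun b α y := by
  have h := integrable_lineTransform (expDecayOn_Dfun_real hb hα) (two_mul_abs_pi_mul_im_lt hx)
  simp only [Complex.ofReal_zero, mul_zero, add_zero] at h
  convert h using 3 with y
  ring_nf

lemma differentiableAt_fourierDfun (hb : 0 < b) (hα : 2 * |α.im| < b + b⁻¹)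
    (hx : |x.im| < -α.im) : DifferentiableAt ℂ (fourierDfun b α) x :=
  (hasDerivAt_lineTransform (expDecayOn_Dfun_real hb hα)
    (two_mul_abs_pi_mul_im_lt hx)).differentiableAt.comp x (differentiableAt_id.const_mul (π : ℂ))

lemma exists_norm_fourierDfun_le (hb : 0 < b) (hα : 2 * |α.im| < b + b⁻¹) {s : ℝ}
    (hs : s < -α.im) : ∃ C, ∀ x : ℂ, |x.im| ≤ s → ‖fourierDfun b α x‖ ≤ C := by
  obtain ⟨C, hC⟩ := exists_norm_lineTransform_le (expDecayOn_Dfun_real hb hα) (s' := π * s)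
    (by nlinarith [Real.pi_pos])
  refine ⟨C, fun x hx => ?_⟩
  have him : |((π : ℂ) * x).im| ≤ π * s := by
    rw [Complex.im_ofReal_mul, abs_mul, abs_of_pos Real.pi_pos]
    gcongr
  simpa [fourierDfun] using hC _ him

lemma fourierDfun_neg (hb : 0 < b) (hα : 2 * |α.im| < b + b⁻¹) (x : ℂ) :
    fourierDfun b α (-x) = fourierDfun b α x := by
  rw [fourierDfun, mul_neg, lineTransform_neg, neg_zero, fourierDfun, lineTransform, lineTransform]
  refine integral_congr_ae (ae_of_all _ fun t => ?_)
  simp only [Complex.ofReal_zero, mul_zero, add_zero]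
  rw [Dfun_neg hb (by simpa using hα)]

lemma exp_fourier_add_half (x c t : ℂ) :
    Complex.exp (-2 * π * Complex.I * (x + Complex.I * c / 2) * t) =
      Complex.exp (-2 * π * Complex.I * x * t) * Complex.exp (π * c * t) := by
  rw [← Complex.exp_add]
  congr 1
  linear_combination (-(π * c * t)) * Complex.I_sq

lemma lineTransform_Dfun_half (hb : 0 < b) (hγ : 2 * |γ.im| < b⁻¹) (hx : |x.im| < -γ.im) :
    lineTransform (Dfun b γ) (b / 2) (π * x) = Complex.exp (π * b * x) *
      (Complex.exp (π * b * γ) * fourierDfun b (γ - Complex.I * b / 2) (x + Complex.I * b / 2) +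
        Complex.exp (-(π * b * γ)) *
          fourierDfun b (γ - Complex.I * b / 2) (x - Complex.I * b / 2)) := by
  have him : (Complex.I * b / 2 : ℂ).im = b / 2 := by simp
  have hα := two_mul_abs_im_sub_half_lt hb hγ
  obtain ⟨hlower, hupper⟩ := abs_lt.mp hx
  have hplus := integrable_fourierDfun hb hα (x := x + Complex.I * b / 2) (by
    rw [Complex.add_im, Complex.sub_im, him, abs_lt]
    constructor <;> linarith)
  have hminus := integrable_fourierDfun hb hα (x := x - Complex.I * b / 2) (by
    rw [Complex.sub_im, Complex.sub_im, him, abs_lt]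
    constructor <;> linarith)
  rw [fourierDfun_eq_integral, fourierDfun_eq_integral, ← integral_const_mul, ← integral_const_mul,
    ← integral_add (hplus.const_mul _) (hminus.const_mul _), ← integral_const_mul, lineTransform]
  refine integral_congr_ae (ae_of_all _ fun t => ?_)
  have hshift := Dfun_add_half hb (α := γ) (y := t) (by simpa using hγ)
  have hcosh : 2 * Complex.cosh (π * b * (t + γ)) =
      Complex.exp (π * b * t) * Complex.exp (π * b * γ) +
        Complex.exp (-(π * b * t)) * Complex.exp (-(π * b * γ)) := by
    rw [Complex.two_cosh, ← Complex.exp_add, ← Complex.exp_add]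
    ring_nf
  have hline : Complex.exp (-2 * Complex.I * (π * x) * (t + Complex.I * b / 2)) =
      Complex.exp (π * b * x) * Complex.exp (-2 * π * Complex.I * x * t) := by
    rw [mul_comm (Complex.exp _), mul_right_comm _ x, ← exp_fourier_add_half]
    ring_nf
  have hneg := exp_fourier_add_half x (-b) t
  rw [mul_neg _ (b : ℂ), neg_div, ← sub_eq_add_neg, mul_neg _ (b : ℂ), neg_mul _ (t : ℂ)] at hneg
  simp only [Complex.ofReal_div, Complex.ofReal_ofNat, ← mul_div_assoc]
  rw [hline, hshift, hcosh, exp_fourier_add_half, hneg]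
  ring

lemma fourierDfun_add_half_mul_sinh (hb : 0 < b) (hγ : 2 * |γ.im| < b⁻¹) (hx : |x.im| < -γ.im) :
    fourierDfun b (γ - Complex.I * b / 2) (x + Complex.I * b / 2) *
        Complex.sinh (π * b * (x + γ)) =
      fourierDfun b (γ - Complex.I * b / 2) (x - Complex.I * b / 2) *
        Complex.sinh (π * b * (γ - x)) := by
  have hα := two_mul_abs_im_sub_half_lt hb hγ
  have hcontour : lineTransform (Dfun b γ) (-(b / 2)) (π * x) =
      lineTransform (Dfun b γ) (b / 2) (π * x) :=
    lineTransform_eq_lineTransform (by linarith)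
      ((expDecayOn_Dfun hb (m := b / 2) (by linarith)).mono fun w hw => abs_le.mpr hw)
      (two_mul_abs_pi_mul_im_lt hx)
  have hreflect : lineTransform (Dfun b γ) (-(b / 2)) (π * x) =
      lineTransform (Dfun b γ) (b / 2) (π * -x) := by
    rw [mul_neg, lineTransform_neg, lineTransform, lineTransform]
    refine integral_congr_ae (ae_of_all _ fun t => ?_)
    simp only
    rw [Dfun_neg hb]
    rw [ofReal_add_I_mul_im, abs_neg, abs_of_pos (half_pos hb)]
    linarith
  rw [hreflect, lineTransform_Dfun_half hb hγ hx, lineTransform_Dfun_half hb hγ (by simpa using hx),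
    neg_add_eq_sub, ← neg_add', ← neg_sub x, fourierDfun_neg hb hα, fourierDfun_neg hb hα]
    at hcontour
  have hsinh : ∀ u v : ℂ, 2 * Complex.sinh (u + v) =
      Complex.exp u * Complex.exp v - Complex.exp (-u) * Complex.exp (-v) := fun u v => by
    rw [Complex.two_sinh, neg_add, Complex.exp_add, Complex.exp_add]
  have hplus := hsinh (π * b * x) (π * b * γ)
  have hminus := hsinh (π * b * -x) (π * b * γ)
  rw [← mul_add] at hplus hminus
  rw [neg_add_eq_sub, mul_neg _ x, neg_neg] at hminus
  rw [mul_neg _ x] at hcontour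
  linear_combination (fourierDfun b (γ - Complex.I * b / 2) (x + Complex.I * b / 2) / 2) * hplus -
    (fourierDfun b (γ - Complex.I * b / 2) (x - Complex.I * b / 2) / 2) * hminus - hcontour / 2

end FourierTransform

section Reflection

variable {b : ℝ} {α a x z : ℂ}

lemma neg_sub_cb_im (b : ℝ) (a : ℂ) : (-a - cb b).im = -(a.im + (b + b⁻¹) / 2) := by
  rw [Complex.sub_im, Complex.neg_im, cb_im]
  ring

lemma two_mul_abs_im_neg_sub_cb_lt (ha₁ : -((b + b⁻¹) / 2) < a.im) (ha₂ : a.im < 0) :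
    2 * |(-a - cb b).im| < b + b⁻¹ := by
  rw [neg_sub_cb_im, abs_neg, abs_of_pos (by linarith)]
  linarith

lemma fourierDfun_add_half_mul_cosh (hb : 0 < b) (ha : a.im < 0) (hx : |x.im| < a.im + b⁻¹ / 2) :
    fourierDfun b (-a - cb b) (x + Complex.I * b / 2) * Complex.cosh (π * b * (x - a)) =
      fourierDfun b (-a - cb b) (x - Complex.I * b / 2) * Complex.cosh (π * b * (x + a)) := by
  set γ := -a - Complex.I * (b⁻¹ : ℝ) / 2 with hγ
  have hγ_im : γ.im = -(a.im + b⁻¹ / 2) := by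
    have him : (Complex.I * (b⁻¹ : ℝ) / 2).im = b⁻¹ / 2 := by simp
    rw [hγ, Complex.sub_im, Complex.neg_im, him]
    ring
  have hcb : -a - cb b = γ - Complex.I * b / 2 := by
    rw [hγ, cb, Complex.ofReal_inv]
    ring
  have hsinh : ∀ u : ℂ, Complex.sinh (u - π / 2 * Complex.I) = -(Complex.cosh u * Complex.I) :=
    fun u => by
      rw [Complex.sinh_sub, Complex.cosh_mul_I, Complex.sinh_mul_I, Complex.cos_pi_div_two,
        Complex.sin_pi_div_two]
      ring
  have hbb : (b : ℂ) * (b : ℂ)⁻¹ = 1 := mul_inv_cancel₀ (mod_cast hb.ne')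
  have hdiff := fourierDfun_add_half_mul_sinh hb (γ := γ) (x := x)
    (by rw [hγ_im, abs_neg, abs_of_pos ((abs_nonneg _).trans_lt hx)]; linarith)
    (by rwa [hγ_im, neg_neg])
  have hplus : (π * b * (x + γ) : ℂ) = π * b * (x - a) - π / 2 * Complex.I := by
    rw [hγ, Complex.ofReal_inv]
    linear_combination (-(π * Complex.I / 2)) * hbb
  have hminus : (π * b * (γ - x) : ℂ) = -(π * b * (x + a)) - π / 2 * Complex.I := by
    rw [hγ, Complex.ofReal_inv]
    linear_combination (-(π * Complex.I / 2)) * hbb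
  rw [hplus, hminus, hsinh, hsinh, Complex.cosh_neg] at hdiff
  rw [hcb, ← mul_left_inj' Complex.I_ne_zero]
  linear_combination -hdiff

lemma fourierDfun_div_Dfun_add_half (hb : 0 < b) (ha : a.im < 0)
    (hz : |z.im| < a.im + b⁻¹ / 2) :
    fourierDfun b (-a - cb b) (z + Complex.I * b / 2) / Dfun b a (z + Complex.I * b / 2) =
      fourierDfun b (-a - cb b) (z - Complex.I * b / 2) / Dfun b a (z - Complex.I * b / 2) := by
  have hza : 2 * (|z.im| + |a.im|) < b⁻¹ := by linarith [abs_of_neg ha]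
  have hF := fourierDfun_add_half_mul_cosh hb ha hz
  have hD := Dfun_add_half_mul_cosh hb hza
  have hplus := cosh_mul_add_ne_zero hb hza
  have hminus := cosh_mul_add_ne_zero hb (α := -a) (y := z) (by simpa using hza)
  rw [← sub_eq_add_neg] at hminus
  rw [div_eq_div_iff (Dfun_ne_zero hb _ _) (Dfun_ne_zero hb _ _)]
  apply mul_right_cancel₀ (mul_ne_zero hplus hminus)
  linear_combination
    Dfun b a (z - Complex.I * b / 2) * Complex.cosh (π * b * (z + a)) * hF -
      fourierDfun b (-a - cb b) (z - Complex.I * b / 2) * Complex.cosh (π * b * (z + a)) * hD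

lemma exists_norm_fourierDfun_div_Dfun_le (hb : 0 < b) (ha₁ : -(b⁻¹ / 2) < a.im)
    (ha₂ : a.im < 0) :
    ∃ C, ∀ z : ℂ, |z.im| ≤ b / 2 →
      ‖fourierDfun b (-a - cb b) z / Dfun b a z‖ ≤ C * Real.exp (2 * π * -a.im * |z.re|) := by
  obtain ⟨C₁, hC₁⟩ := exists_norm_fourierDfun_le hb (s := b / 2)
    (two_mul_abs_im_neg_sub_cb_lt (a := a) (by linarith) ha₂) (by rw [neg_sub_cb_im]; linarith)
  obtain ⟨C₂, hC₂⟩ := exists_norm_Dfun_le hb (α := -a) (m := b / 2)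
    (by rw [Complex.neg_im, abs_neg, abs_of_neg ha₂]; linarith)
  refine ⟨C₁ * C₂, fun z hz => ?_⟩
  rw [div_eq_mul_inv, ← Dfun_neg_left, norm_mul, mul_assoc]
  exact mul_le_mul (hC₁ z hz) (hC₂ z hz) (norm_nonneg _) ((norm_nonneg _).trans (hC₁ z hz))

lemma exists_fourierDfun_eq_mul_Dfun (hb : 0 < b) (ha₁ : -(b⁻¹ / 2) < a.im) (ha₂ : a.im < 0) :
    ∃ K, ∀ z : ℂ, |z.im| < a.im + (b + b⁻¹) / 2 →
      fourierDfun b (-a - cb b) z = K * Dfun b a z := by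
  have hα := two_mul_abs_im_neg_sub_cb_lt (a := a) (b := b) (by linarith) ha₂
  have hκπ : b / (2 * π) * π = b / 2 := by field_simp
  have hperiod : ((b / (2 * π) : ℝ) : ℂ) * π * Complex.I = Complex.I * b / 2 := by
    rw [← Complex.ofReal_mul, hκπ]
    push_cast
    ring
  obtain ⟨C, hC⟩ := exists_norm_fourierDfun_div_Dfun_le hb ha₁ ha₂
  obtain ⟨K, hK⟩ := exists_eq_const_of_periodic_of_norm_le_exp
    (f := fun z => fourierDfun b (-a - cb b) z / Dfun b a z) (κ := b / (2 * π))
    (σ := a.im + (b + b⁻¹) / 2) (C := C) (c := b * -a.im) (by positivity)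
    (by rw [hκπ]; linarith)
    (by nlinarith [mul_inv_cancel₀ hb.ne'])
    (fun z hz => (differentiableAt_fourierDfun hb hα (by rwa [neg_sub_cb_im, neg_neg])).div
      (differentiableAt_Dfun hb (by linarith [abs_of_neg ha₂])) (Dfun_ne_zero hb _ _))
    (fun z hz => by
      rw [hperiod]
      exact fourierDfun_div_Dfun_add_half hb ha₂ (by linarith))
    (fun z hz => by
      have hrate : b * -a.im / (b / (2 * π)) = 2 * π * -a.im := by field_simp
      rw [hrate]
      exact hC z (hz.trans_eq hκπ))
  exact ⟨K, fun z hz => by rw [← hK z hz, div_mul_cancel₀ _ (Dfun_ne_zero hb _ _)]⟩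

lemma tendsto_mul_fourierDfun (hb : 0 < b) (hα : 2 * |α.im| < b + b⁻¹) (hα' : α.im < 0) :
    Tendsto (fun η : ℝ => (η : ℂ) * fourierDfun b α (-α - Complex.I * η)) (𝓝[>] 0)
      (𝓝 (2 * π : ℂ)⁻¹) := by
  obtain ⟨m, hm, C, hC⟩ := exists_norm_Dfun_mul_exp_sub_heaviside_le hb hα hα'
  have hcont : Continuous fun y : ℝ => Dfun b α y * Complex.exp (2 * π * Complex.I * α * y) := by
    refine Continuous.mul (continuous_iff_continuousAt.mpr fun y => ?_) (by fun_prop)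
    exact (differentiableAt_Dfun hb (by simpa using hα)).continuousAt.comp
      Complex.continuous_ofReal.continuousAt
  have hscale : Tendsto (fun η : ℝ => 2 * π * η) (𝓝[>] 0) (𝓝[>] 0) := by
    refine tendsto_nhdsWithin_iff.mpr ⟨?_, ?_⟩
    · exact ((continuous_const_mul (2 * π)).tendsto' 0 0 (mul_zero _)).mono_left nhdsWithin_le_nhds
    · filter_upwards [self_mem_nhdsWithin] with η (hη : 0 < η)
      exact Set.mem_Ioi.mpr (by positivity)
  have hlim := ((tendsto_mul_integral_exp_neg_mul hcont hm hC).comp hscale).const_mul (2 * π : ℂ)⁻¹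
  rw [mul_one] at hlim
  refine hlim.congr fun η => ?_
  have hπ : (2 * π : ℂ) ≠ 0 := by simp
  rw [Function.comp_apply, fourierDfun_eq_integral, Complex.ofReal_mul, ← mul_assoc,
    Complex.ofReal_mul, Complex.ofReal_ofNat, inv_mul_cancel_left₀ hπ]
  congr 2
  funext y
  rw [mul_comm (Dfun b α y), ← mul_assoc, ← Complex.exp_add]
  congr 2
  linear_combination (-2 * π * η * y : ℂ) * Complex.I_sq

lemma tendsto_mul_Dfun (hb : 0 < b) (ha₁ : -((b + b⁻¹) / 2) < a.im) (ha₂ : a.im < 0) :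
    Tendsto (fun η : ℝ => (η : ℂ) * Dfun b a (a + cb b - Complex.I * η)) (𝓝[>] 0)
      (𝓝 (wb b (2 * a + cb b) / (2 * π))) := by
  have hcont : ContinuousAt (wb b) (2 * a + cb b) := by
    refine (differentiableAt_wb hb ?_).continuousAt
    have him : (2 * a + cb b).im = 2 * a.im + (b + b⁻¹) / 2 := by simp [cb_im]
    have : |(2 * a + cb b).im| < (b + b⁻¹) / 2 := by
      rw [him, abs_lt]
      constructor <;> linarith
    linarith
  have hline : Tendsto (fun η : ℝ => 2 * a + cb b - Complex.I * η) (𝓝[>] 0)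
      (𝓝 (2 * a + cb b)) :=
    (Continuous.tendsto' (by fun_prop) 0 _ (by simp)).mono_left nhdsWithin_le_nhds
  refine ((hcont.tendsto.comp hline).div (tendsto_wb_cb_sub_div hb) (by simp)).congr fun η => ?_
  rw [Dfun, Pi.div_apply, Function.comp_apply, div_div_eq_mul_div]
  ring_nf

lemma Dfun_eq_wb_mul_fourierDfun (hb : 0 < b) (ha₁ : -(b⁻¹ / 2) < a.im) (ha₂ : a.im < 0)
    (hz : |z.im| < a.im + (b + b⁻¹) / 2) :
    Dfun b a z = wb b (2 * a + cb b) * fourierDfun b (-a - cb b) z := by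
  obtain ⟨K, hK⟩ := exists_fourierDfun_eq_mul_Dfun hb ha₁ ha₂
  have hα := two_mul_abs_im_neg_sub_cb_lt (b := b) (a := a) (by linarith) ha₂
  have hF := tendsto_mul_fourierDfun hb hα (by rw [neg_sub_cb_im]; linarith)
  have hD := (tendsto_mul_Dfun hb (a := a) (by linarith) ha₂).const_mul K
  have hpole : (2 * π : ℂ)⁻¹ = K * (wb b (2 * a + cb b) / (2 * π)) := by
    refine tendsto_nhds_unique_of_eventuallyEq hF hD ?_
    filter_upwards [Ioo_mem_nhdsGT (show 0 < a.im + (b + b⁻¹) / 2 by linarith)] with η hη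
    rw [neg_sub', neg_neg, sub_neg_eq_add, hK, mul_left_comm]
    rw [Complex.sub_im, Complex.add_im, cb_im, Complex.I_mul_im, Complex.ofReal_re, abs_lt]
    constructor <;> linarith [hη.1, hη.2]
  have hKw : wb b (2 * a + cb b) * K = 1 := by
    field_simp at hpole
    rw [mul_comm, ← hpole]
  rw [hK z hz, ← mul_assoc, hKw, one_mul]

theorem statement10_general (b : ℝ) (hb : 0 < b) (x a : ℂ) (ha₁ : -(max b b⁻¹ / 2) < a.im)
    (ha₂ : a.im < 0) (hx : |x.im| < a.im + (b + b⁻¹) / 2) :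
    Integrable (fun y : ℝ =>
        Complex.exp (-2 * π * Complex.I * x * y) * Dfun b (-a - cb b) y) ∧
      Dfun b a x = wb b (2 * a + cb b) *
        ∫ y : ℝ, Complex.exp (-2 * π * Complex.I * x * y) * Dfun b (-a - cb b) y := by
  have hbinv := inv_pos.mpr hb
  have ha : -((b + b⁻¹) / 2) < a.im := by
    linarith [max_le_add_of_nonneg hb.le hbinv.le]
  refine ⟨integrable_fourierDfun hb (two_mul_abs_im_neg_sub_cb_lt ha ha₂)
    (by rwa [neg_sub_cb_im, neg_neg]), ?_⟩
  rw [← fourierDfun_eq_integral]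
  rcases le_total b b⁻¹ with h | h
  · rw [max_eq_right h] at ha₁
    exact Dfun_eq_wb_mul_fourierDfun hb ha₁ ha₂ hx
  · rw [max_eq_left h] at ha₁
    have hdual := Dfun_eq_wb_mul_fourierDfun hbinv (by rwa [inv_inv]) ha₂
      (by rwa [inv_inv, add_comm b⁻¹])
    rwa [Dfun_inv, wb_inv, cb_inv, fourierDfun_inv] at hdual

end Reflection

/-- the Fourier transform formula
`D_a(x) = w_b(2a+c_b)·∫ e^{−2πixy}·D_{−a−c_b}(y) dy` for real `x`
and `−(b+b⁻¹)/4 < Im a < 0`, the integral being absolutely convergent. -/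
theorem statement10 (b : ℝ) (hb : 0 < b) (x : ℝ) (a : ℂ)
    (ha₁ : -((b + b⁻¹) / 4) < a.im) (ha₂ : a.im < 0) :
    Integrable (fun y : ℝ =>
      Complex.exp (-2 * (π : ℂ) * Complex.I * (x : ℂ) * (y : ℂ)) *
        Dfun b (-a - cb b) (y : ℂ)) ∧
    Dfun b a (x : ℂ) =
      wb b (2 * a + cb b) *
        ∫ y : ℝ, Complex.exp (-2 * (π : ℂ) * Complex.I * (x : ℂ) * (y : ℂ)) *
          Dfun b (-a - cb b) (y : ℂ) := by
  have hmax : (b + b⁻¹) / 4 ≤ max b b⁻¹ / 2 := by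
    linarith [le_max_left b b⁻¹, le_max_right b b⁻¹]
  exact statement10_general b hb x a (by linarith) ha₂
    (by simpa using by linarith [inv_pos.mpr hb])

end
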